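/- For every f : ℝ → ℂ which is 2π-periodic and Lipschitz continuous, the limit as ε → 0⁺ of (1/4)∫_{I³} δ_ε(Ω(x,y,z)) |f(x)+f(y)−f(z)−f(x+y−z)|² dx dy dz exists, is non-negative and finite, and equals ∫_{I²} (1/(2√(F₊(x,z)))) |f(x) + f(h(x,z)) − f(z) − f(x−z+h(x,z))|² dx dz; moreover this quantity is also equal to ∫_{I²} f(x)* (V(x)𝟙(x=z-part as multiplication) + K₁(x,z) − 2K₂(x,z)) f(z) dx dz, i.e. to ∫_I V(x)|f(x)|² dx + ∫_{I²} f(x)* (K₁(x,z) − 2K₂(x,z)) f(z) dx dz. -/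

import Mathlib

open MeasureTheory Real Set Filter
open scoped Topology ENNReal ComplexConjugate

noncomputable section

/-- The fundamental periodic cell `I = [0, 2π)`. -/
def II : Set ℝ := Set.Ico 0 (2 * π)

/-- Lebesgue measure restricted to `I`. -/
def muI : Measure ℝ := volume.restrict II

/-- The dispersion relation `ω(x) = |sin(x/2)|`. -/
def omg (x : ℝ) : ℝ := |Real.sin (x / 2)|

/-- `Ω(x,y,z) = ω(x) + ω(y) − ω(z) − ω(x+y−z)`. -/
def Omg (x y z : ℝ) : ℝ := omg x + omg y - omg z - omg (x + y - z)

/-- The representative of `x` modulo `2π` lying in `[0, 2π)`. -/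
def mod2pi (x : ℝ) : ℝ := x - 2 * π * (⌊x / (2 * π)⌋ : ℝ)

/-- `h` on the fundamental cell: `h(x,z) = (z−x)/2 + 2 arcsin( tan(|z−x|/4) cos((x+z)/4) )`. -/
def h0 (x z : ℝ) : ℝ :=
  (z - x) / 2 + 2 * Real.arcsin (Real.tan (|z - x| / 4) * Real.cos ((x + z) / 4))

/-- The extension of `h` to all of `ℝ²`: `h(x,z) = h(x mod 2π, z mod 2π) − (x − (x mod 2π))`. -/
def hFPU (x z : ℝ) : ℝ := h0 (mod2pi x) (mod2pi z) - (x - mod2pi x)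

/-- `F₊(x,y) = (cos(x/2)+cos(y/2))² + 4 sin(x/2) sin(y/2)`. -/
def Fp (x y : ℝ) : ℝ :=
  (Real.cos (x / 2) + Real.cos (y / 2)) ^ 2 + 4 * Real.sin (x / 2) * Real.sin (y / 2)

/-- `F₋(x,y) = (cos(x/2)+cos(y/2))² − 4 sin(x/2) sin(y/2)`. -/
def Fm (x y : ℝ) : ℝ :=
  (Real.cos (x / 2) + Real.cos (y / 2)) ^ 2 - 4 * Real.sin (x / 2) * Real.sin (y / 2)

/-- The kernel `K₁(x,y) = 4·𝟙(F₋(x,y) > 0)/√(F₋(x,y))`. -/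
def K1 (x y : ℝ) : ℝ := if 0 < Fm x y then 4 / Real.sqrt (Fm x y) else 0

/-- The kernel `K₂(x,y) = 2/√(F₊(x,y))`. -/
def K2 (x y : ℝ) : ℝ := 2 / Real.sqrt (Fp x y)

/-- `V(x) = ∫_I K₂(x,y) dy`. -/
def VV (x : ℝ) : ℝ := ∫ y in II, K2 x y

/-- `W(x) = sin²(x/2)·V(x)`. -/
def WW (x : ℝ) : ℝ := Real.sin (x / 2) ^ 2 * VV x

/-- The regularized delta function `δ_ε(X) = (ε/π)/(ε² + X²)`. -/
def deltaE (ε X : ℝ) : ℝ := (ε / π) / (ε ^ 2 + X ^ 2)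

/-- The limiting quadratic form
`∫_{I²} |f(x)+f(h(x,z))−f(z)−f(x−z+h(x,z))|² / (2√(F₊(x,z))) dx dz`. -/
def Elim (f : ℝ → ℂ) : ℝ :=
  ∫ p in II ×ˢ II,
    (1 / (2 * Real.sqrt (Fp p.1 p.2))) *
      ‖f p.1 + f (hFPU p.1 p.2) - f p.2 - f (p.1 - p.2 + hFPU p.1 p.2)‖ ^ 2

/-- open triangle -/
def Tri : Set (ℝ × ℝ) := {p | 0 < p.1 ∧ p.1 < p.2 ∧ p.2 < 2 * π}

def rI (x : ℝ) : ℝ := 1 / √(Real.sin (x / 2))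

lemma isOpen_Tri : IsOpen Tri := by
  unfold Tri
  exact (isOpen_lt continuous_const continuous_fst).inter
    ((isOpen_lt continuous_fst continuous_snd).inter (isOpen_lt continuous_snd continuous_const))

lemma rI_nonneg (x : ℝ) : 0 ≤ rI x := by unfold rI; positivity

lemma measurable_rI : Measurable rI := by unfold rI; fun_prop

lemma sin_half_nonneg {x : ℝ} (h : x ∈ II) : 0 ≤ Real.sin (x / 2) :=
  Real.sin_nonneg_of_nonneg_of_le_pi (by linarith [h.1]) (by linarith [h.2])

lemma integrableOn_rI : IntegrableOn rI II := by
  have h1 : IntegrableOn (fun x : ℝ => x ^ (-(1/2) : ℝ)) II := by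
    have := (intervalIntegral.intervalIntegrable_rpow' (a := 0) (b := 2 * π) (r := -(1/2)) (by norm_num))
    rw [intervalIntegrable_iff_integrableOn_Ico_of_le (by positivity)] at this
    exact this
  have h2 : IntegrableOn (fun x : ℝ => (2 * π - x) ^ (-(1/2) : ℝ)) II := by
    have := (intervalIntegral.intervalIntegrable_rpow' (a := 0) (b := 2 * π) (r := -(1/2)) (by norm_num))
    have := this.comp_sub_left (2 * π)
    simp only [sub_zero, sub_self] at this
    have := this.symm
    rw [intervalIntegrable_iff_integrableOn_Ico_of_le (by positivity)] at this
    exact this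
  have h3 := (h1.add h2).const_mul (√π)
  refine Integrable.mono' h3 measurable_rI.aestronglyMeasurable ?_
  refine (ae_restrict_iff' measurableSet_Ico).2 (Eventually.of_forall fun x hx => ?_)
  rw [Real.norm_of_nonneg (rI_nonneg x)]
  have hx0 := hx.1
  have hx1 := hx.2
  have key : ∀ t : ℝ, 0 ≤ t → t ≤ π → rI t ≤ √π * t ^ (-(1/2) : ℝ) := by
    intro t ht0 ht1
    rcases ht0.eq_or_lt with rfl | ht
    · simp [rI]
    have hs : t / π ≤ Real.sin (t / 2) := by
      have := Real.mul_le_sin (x := t / 2) (by linarith) (by linarith)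
      calc t / π = 2 / π * (t / 2) := by ring
        _ ≤ _ := this
    have h4 : √(t / π) ≤ √(Real.sin (t / 2)) := Real.sqrt_le_sqrt hs
    have h5 : 0 < √(t / π) := by positivity
    calc rI t ≤ 1 / √(t / π) := by unfold rI; gcongr
      _ = √π * t ^ (-(1/2) : ℝ) := by
        rw [Real.rpow_neg ht.le, ← Real.sqrt_eq_rpow, Real.sqrt_div ht.le]
        field_simp
  have n1 : 0 ≤ √π * x ^ (-(1/2) : ℝ) := by positivity
  have n2 : 0 ≤ √π * (2 * π - x) ^ (-(1/2) : ℝ) := by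
    have : 0 ≤ 2 * π - x := by linarith
    positivity
  show rI x ≤ √π * (x ^ (-(1/2) : ℝ) + (2 * π - x) ^ (-(1/2) : ℝ))
  rw [mul_add]
  rcases le_total x π with h | h
  · linarith [key x hx0 h]
  · have h6 := key (2 * π - x) (by linarith) (by linarith)
    have : rI (2 * π - x) = rI x := by
      unfold rI
      rw [show (2 * π - x) / 2 = π - x / 2 by ring, Real.sin_pi_sub]
    linarith

lemma integrableOn_rI_rI : IntegrableOn (fun p : ℝ × ℝ => rI p.1 * rI p.2) (II ×ˢ II) := by
  have := Integrable.mul_prod integrableOn_rI integrableOn_rI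
  rwa [Measure.prod_restrict] at this

lemma Fp_nonneg {x z : ℝ} (hx : x ∈ II) (hz : z ∈ II) : 0 ≤ Fp x z := by
  unfold Fp
  have := mul_nonneg (sin_half_nonneg hx) (sin_half_nonneg hz)
  nlinarith [sq_nonneg (Real.cos (x / 2) + Real.cos (z / 2))]

lemma Fp_symm (x z : ℝ) : Fp x z = Fp z x := by unfold Fp; ring
lemma Fm_symm (x z : ℝ) : Fm x z = Fm z x := by unfold Fm; ring
lemma K2_symm (x z : ℝ) : K2 x z = K2 z x := by unfold K2; rw [Fp_symm]

lemma Fp_refl (x z : ℝ) : Fp (2 * π - x) (2 * π - z) = Fp x z := by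
  unfold Fp
  rw [show (2 * π - x) / 2 = π - x / 2 by ring, show (2 * π - z) / 2 = π - z / 2 by ring]
  simp only [Real.cos_pi_sub, Real.sin_pi_sub]; ring
lemma Fm_refl (x z : ℝ) : Fm (2 * π - x) (2 * π - z) = Fm x z := by
  unfold Fm
  rw [show (2 * π - x) / 2 = π - x / 2 by ring, show (2 * π - z) / 2 = π - z / 2 by ring]
  simp only [Real.cos_pi_sub, Real.sin_pi_sub]; ring
lemma K1_refl (x z : ℝ) : K1 (2 * π - x) (2 * π - z) = K1 x z := by
  unfold K1; rw [Fm_refl]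

lemma measurable_Fp : Measurable (fun p : ℝ × ℝ => Fp p.1 p.2) := by unfold Fp; fun_prop
lemma measurable_Fm : Measurable (fun p : ℝ × ℝ => Fm p.1 p.2) := by unfold Fm; fun_prop
lemma measurable_K2 : Measurable (fun p : ℝ × ℝ => K2 p.1 p.2) := by
  unfold K2; exact measurable_const.div measurable_Fp.sqrt

lemma inv_sqrt_Fp_le {x z : ℝ} (hx : x ∈ Ioo 0 (2 * π)) (hz : z ∈ Ioo 0 (2 * π)) :
    1 / √(Fp x z) ≤ rI x * rI z := by
  have hsx : 0 < Real.sin (x / 2) :=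
    Real.sin_pos_of_pos_of_lt_pi (by linarith [hx.1]) (by linarith [hx.2])
  have hsz : 0 < Real.sin (z / 2) :=
    Real.sin_pos_of_pos_of_lt_pi (by linarith [hz.1]) (by linarith [hz.2])
  unfold rI
  rw [div_mul_div_comm, one_mul, ← Real.sqrt_mul hsx.le]
  have : Real.sin (x / 2) * Real.sin (z / 2) ≤ Fp x z := by
    unfold Fp
    nlinarith [sq_nonneg (Real.cos (x / 2) + Real.cos (z / 2)), mul_pos hsx hsz]
  have h0 : 0 < Real.sin (x / 2) * Real.sin (z / 2) := mul_pos hsx hsz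
  gcongr

lemma II_ae : (II : Set ℝ) =ᵐ[volume] Ioo 0 (2 * π) := Ioo_ae_eq_Ico.symm

lemma II2_ae : (II ×ˢ II : Set (ℝ × ℝ)) =ᵐ[volume] (Ioo 0 (2 * π) ×ˢ Ioo 0 (2 * π) : Set (ℝ × ℝ)) :=
  Measure.set_prod_ae_eq II_ae II_ae

lemma integrableOn_inv_sqrt_Fp :
    IntegrableOn (fun p : ℝ × ℝ => 1 / √(Fp p.1 p.2)) (II ×ˢ II) := by
  have h := integrableOn_rI_rI
  rw [integrableOn_congr_set_ae II2_ae] at h ⊢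
  refine Integrable.mono' h (measurable_const.div measurable_Fp.sqrt).aestronglyMeasurable ?_
  refine (ae_restrict_iff' (measurableSet_Ioo.prod measurableSet_Ioo)).2
    (Eventually.of_forall fun p hp => ?_)
  rw [Real.norm_of_nonneg (by positivity)]
  exact inv_sqrt_Fp_le hp.1 hp.2

lemma integrableOn_K2 : IntegrableOn (fun p : ℝ × ℝ => K2 p.1 p.2) (II ×ˢ II) := by
  have := integrableOn_inv_sqrt_Fp.const_mul 2
  refine this.congr (Eventually.of_forall fun p => ?_)
  simp only [K2]; ring

lemma integrableOn_S :
    IntegrableOn (fun p : ℝ × ℝ => 1 / Real.sin ((p.1 + p.2) / 4)) (II ×ˢ II) := by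
  have h := integrableOn_rI_rI
  rw [integrableOn_congr_set_ae II2_ae] at h ⊢
  refine Integrable.mono' h (Measurable.aestronglyMeasurable (by fun_prop)) ?_
  refine (ae_restrict_iff' (measurableSet_Ioo.prod measurableSet_Ioo)).2
    (Eventually.of_forall fun p hp => ?_)
  obtain ⟨x, y⟩ := p
  obtain ⟨⟨hx0, hx1⟩, hy0, hy1⟩ := hp
  simp only at *
  have hS : 0 < Real.sin ((x + y) / 4) :=
    Real.sin_pos_of_pos_of_lt_pi (by linarith) (by linarith)
  rw [Real.norm_of_nonneg (by positivity)]
  have a1 : 0 < Real.sin (x / 4) := Real.sin_pos_of_pos_of_lt_pi (by linarith) (by linarith)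
  have a2 : 0 < Real.sin (y / 4) := Real.sin_pos_of_pos_of_lt_pi (by linarith) (by linarith)
  have b1 : 0 < Real.cos (x / 4) := Real.cos_pos_of_mem_Ioo ⟨by linarith, by linarith⟩
  have b2 : 0 < Real.cos (y / 4) := Real.cos_pos_of_mem_Ioo ⟨by linarith, by linarith⟩
  have e1 : Real.sin (x / 2) = 2 * Real.sin (x / 4) * Real.cos (x / 4) := by
    rw [← Real.sin_two_mul]; congr 1; ring
  have e2 : Real.sin (y / 2) = 2 * Real.sin (y / 4) * Real.cos (y / 4) := by
    rw [← Real.sin_two_mul]; congr 1; ring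
  have e3 : Real.sin ((x + y) / 4)
      = Real.sin (x / 4) * Real.cos (y / 4) + Real.cos (x / 4) * Real.sin (y / 4) := by
    rw [← Real.sin_add]; congr 1; ring
  have hsx : 0 < Real.sin (x / 2) := by rw [e1]; positivity
  have hsy : 0 < Real.sin (y / 2) := by rw [e2]; positivity
  unfold rI
  rw [div_mul_div_comm, one_mul, ← Real.sqrt_mul hsx.le]
  have h1 : √(Real.sin (x / 2) * Real.sin (y / 2)) ≤ Real.sin ((x + y) / 4) := by
    apply Real.sqrt_le_iff.2 ⟨hS.le, ?_⟩
    rw [e1, e2, e3]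
    nlinarith [sq_nonneg (Real.sin (x / 4) * Real.cos (y / 4) - Real.cos (x / 4) * Real.sin (y / 4))]
  have h0 : 0 < √(Real.sin (x / 2) * Real.sin (y / 2)) := by positivity
  gcongr

lemma Fp_eq (x z : ℝ) : Fp x z = 4 * (Real.cos ((z - x) / 4) ^ 2
    - Real.cos ((x + z) / 4) ^ 2 * Real.sin ((z - x) / 4) ^ 2) := by
  unfold Fp
  rw [show x / 2 = (x + z) / 4 - (z - x) / 4 by ring, show z / 2 = (x + z) / 4 + (z - x) / 4 by ring]
  simp only [Real.cos_sub, Real.cos_add, Real.sin_sub, Real.sin_add]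
  generalize (x + z) / 4 = s
  generalize (z - x) / 4 = q
  linear_combination (4 * Real.cos q ^ 2) * (Real.sin_sq_add_cos_sq s)

lemma Fp_pos {x z : ℝ} (h : (x, z) ∈ Tri) : 0 < Fp x z := by
  obtain ⟨h0, h1, h2⟩ := h
  simp only at *
  unfold Fp
  have hsx : 0 < Real.sin (x / 2) :=
    Real.sin_pos_of_pos_of_lt_pi (by linarith) (by linarith)
  have hsz : 0 < Real.sin (z / 2) :=
    Real.sin_pos_of_pos_of_lt_pi (by linarith) (by linarith)
  nlinarith [sq_nonneg (Real.cos (x / 2) + Real.cos (z / 2)), mul_pos hsx hsz]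

lemma mod2pi_of_mem {x : ℝ} (h : x ∈ II) : mod2pi x = x := by
  unfold mod2pi
  have : ⌊x / (2 * π)⌋ = 0 := by
    rw [Int.floor_eq_zero_iff]
    exact ⟨div_nonneg h.1 (by positivity), (div_lt_one (by positivity)).2 h.2⟩
  simp [this]

lemma hFPU_eq {x z : ℝ} (hx : x ∈ II) (hz : z ∈ II) : hFPU x z = h0 x z := by
  unfold hFPU; rw [mod2pi_of_mem hx, mod2pi_of_mem hz]; ring

lemma measurable_h0 : Measurable (fun p : ℝ × ℝ => h0 p.1 p.2) := by
  unfold h0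
  have : Measurable Real.tan := by
    have : Real.tan = fun x => Real.sin x / Real.cos x := by ext x; exact Real.tan_eq_sin_div_cos x
    rw [this]; fun_prop
  have h2 : Measurable (fun p : ℝ × ℝ => Real.tan (|p.2 - p.1| / 4) * Real.cos ((p.1 + p.2) / 4)) :=
    (this.comp (by fun_prop : Measurable fun p : ℝ × ℝ => |p.2 - p.1| / 4)).mul (by fun_prop)
  have h3 := Real.measurable_arcsin.comp h2
  exact ((measurable_snd.sub measurable_fst).div_const 2).add (h3.const_mul 2)

lemma h0_refl (x z : ℝ) : h0 (2 * π - x) (2 * π - z) = - h0 x z := by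
  unfold h0
  rw [show (2 * π - z - (2 * π - x)) = -(z - x) by ring, abs_neg,
    show (2 * π - x + (2 * π - z)) / 4 = π - (x + z) / 4 by ring, Real.cos_pi_sub, mul_neg,
    Real.arcsin_neg]
  ring

/-- basic facts about h0 on the triangle -/
lemma h0_tri {x z : ℝ} (h : (x, z) ∈ Tri) :
    0 < h0 x z ∧ h0 x z < z - x ∧
    Real.sin (h0 x z / 2 - (z - x) / 4) * Real.cos ((z - x) / 4)
      = Real.sin ((z - x) / 4) * Real.cos ((x + z) / 4) := by
  obtain ⟨hx, hxz, hz⟩ := h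
  simp only at *
  set q := (z - x) / 4 with hq
  set s := (x + z) / 4 with hs
  have hq0 : 0 < q := by rw [hq]; linarith
  have hq1 : q < π / 2 := by rw [hq]; linarith
  have hcq : 0 < Real.cos q := Real.cos_pos_of_mem_Ioo ⟨by linarith, by linarith⟩
  have hsq : 0 < Real.sin q := Real.sin_pos_of_pos_of_lt_pi (by linarith) (by linarith)
  have hh : h0 x z = 2 * q + 2 * Real.arcsin (Real.tan q * Real.cos s) := by
    unfold h0
    rw [abs_of_pos (by linarith : 0 < z - x)]
    rw [hq, hs]; ring
  have c1 : Real.cos s < Real.cos q :=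
    Real.cos_lt_cos_of_nonneg_of_le_pi (by linarith) (by rw [hs]; linarith) (by rw [hq, hs]; linarith)
  have c2 : -Real.cos q < Real.cos s := by
    rw [← Real.cos_pi_sub]
    exact Real.cos_lt_cos_of_nonneg_of_le_pi (by rw [hs]; linarith) (by linarith) (by rw [hq, hs]; linarith)
  have ht : Real.tan q * Real.cos q = Real.sin q := Real.tan_mul_cos hcq.ne'
  have htq : 0 < Real.tan q := Real.tan_pos_of_pos_of_lt_pi_div_two hq0 hq1
  have d1 : Real.tan q * Real.cos s < Real.sin q := by
    rw [← ht]; exact mul_lt_mul_of_pos_left c1 htq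
  have d2 : -Real.sin q < Real.tan q * Real.cos s := by
    rw [← ht, ← mul_neg]; exact mul_lt_mul_of_pos_left c2 htq
  have s1 := Real.sin_le_one q
  have e1 : Real.arcsin (Real.tan q * Real.cos s) < q :=
    (Real.arcsin_lt_iff_lt_sin' ⟨by linarith, hq1.le⟩).2 d1
  have e2 : -q < Real.arcsin (Real.tan q * Real.cos s) := by
    rw [Real.lt_arcsin_iff_sin_lt' ⟨by linarith, by linarith⟩, Real.sin_neg]; exact d2
  refine ⟨by rw [hh]; linarith, by rw [hh]; linarith, ?_⟩
  rw [hh, show (2 * q + 2 * Real.arcsin (Real.tan q * Real.cos s)) / 2 - q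
    = Real.arcsin (Real.tan q * Real.cos s) by ring,
    Real.sin_arcsin (by linarith) (by linarith)]
  rw [← ht]; ring

lemma cos_h0 {x z : ℝ} (h : (x, z) ∈ Tri) :
    Real.cos ((z - x) / 4) * Real.cos (h0 x z / 2 - (z - x) / 4) = √(Fp x z) / 2 := by
  obtain ⟨a, b, c⟩ := h0_tri h
  obtain ⟨hx, hxz, hz⟩ := h
  simp only at *
  have p1 : 0 < Real.cos ((z - x) / 4) := Real.cos_pos_of_mem_Ioo ⟨by linarith, by linarith⟩
  have p2 : 0 < Real.cos (h0 x z / 2 - (z - x) / 4) :=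
    Real.cos_pos_of_mem_Ioo ⟨by linarith, by linarith⟩
  rw [eq_div_iff two_ne_zero, eq_comm, Real.sqrt_eq_iff_mul_self_eq_of_pos (by positivity), Fp_eq]
  have e := Real.sin_sq_add_cos_sq (h0 x z / 2 - (z - x) / 4)
  generalize Real.cos ((z - x) / 4) = C at *
  generalize Real.sin ((z - x) / 4) = S at *
  generalize Real.cos ((x + z) / 4) = c0 at *
  generalize Real.sin (h0 x z / 2 - (z - x) / 4) = s1 at *
  linear_combination (4 * C ^ 2) * e - 4 * (s1 * C + S * c0) * c

def Qd : Set (ℝ × ℝ) := {p | |p.1| + |p.2| < π / 2}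
def QdP : Set (ℝ × ℝ) := {p | |p.1| + |p.2| < π / 2 ∧ 0 < p.2}
def sg (u v : ℝ) : ℝ := Real.arctan (Real.cos v / Real.cos u)
def NN (u v : ℝ) : ℝ := Real.cos u ^ 2 + Real.cos v ^ 2
def mQ (u v : ℝ) : ℝ := 2 / √(NN u v)
def Phi (p : ℝ × ℝ) : ℝ × ℝ := (2 * sg p.1 p.2 + 2 * p.1, π + 2 * sg p.1 p.2 - 2 * p.2)
def Psi (p : ℝ × ℝ) : ℝ × ℝ := (2 * sg p.1 p.2 + 2 * p.1, 2 * sg p.1 p.2 - 2 * p.1)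
def DD : Set (ℝ × ℝ) := {p | 0 < p.1 ∧ 0 < p.2 ∧ p.1 + p.2 < 2 * π ∧ 0 < Fm p.1 p.2}

lemma isOpen_Qd : IsOpen Qd := isOpen_lt (by fun_prop) (by fun_prop)
lemma isOpen_QdP : IsOpen QdP :=
  isOpen_Qd.inter (isOpen_lt continuous_const continuous_snd)

lemma measurable_sg : Measurable (fun p : ℝ × ℝ => sg p.1 p.2) := by
  unfold sg
  exact Real.measurable_arctan.comp
    ((by fun_prop : Measurable fun p : ℝ × ℝ => Real.cos p.2).div (by fun_prop))

lemma measurable_mQ : Measurable (fun p : ℝ × ℝ => mQ p.1 p.2) := by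
  unfold mQ NN; exact measurable_const.div (by fun_prop : Measurable _).sqrt

lemma Qd_cos {u v : ℝ} (h : |u| + |v| < π / 2) : 0 < Real.cos u ∧ 0 < Real.cos v := by
  have := abs_nonneg u
  have := abs_nonneg v
  constructor
  · exact Real.cos_pos_of_mem_Ioo (abs_lt.1 (by linarith))
  · exact Real.cos_pos_of_mem_Ioo (abs_lt.1 (by linarith))

lemma sg_swap {u v : ℝ} (h : |u| + |v| < π / 2) : sg v u = π / 2 - sg u v := by
  obtain ⟨h1, h2⟩ := Qd_cos h
  unfold sg
  rw [← Real.arctan_inv_of_pos (by positivity), inv_div]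

lemma sg_gt {u v : ℝ} (h : |u| + |v| < π / 2) : |u| < sg u v := by
  obtain ⟨h1, h2⟩ := Qd_cos h
  have a0 := abs_nonneg u
  have a1 := abs_nonneg v
  unfold sg
  have e : |u| = Real.arctan (Real.tan |u|) :=
    (Real.arctan_tan (by linarith) (by linarith)).symm
  rw [e]
  apply Real.arctan_strictMono
  rw [Real.tan_eq_sin_div_cos, Real.cos_abs]
  gcongr
  rw [← Real.cos_abs v, ← Real.sin_pi_div_two_sub]
  exact Real.sin_lt_sin_of_lt_of_le_pi_div_two (by linarith) (by linarith) (by linarith)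

lemma sg_lt {u v : ℝ} (h : |u| + |v| < π / 2) : sg u v < π / 2 - |v| := by
  have := sg_gt (u := v) (v := u) (by linarith)
  rw [sg_swap h] at this
  linarith

lemma NN_pos {u v : ℝ} (h : |u| + |v| < π / 2) : 0 < NN u v := by
  obtain ⟨h1, h2⟩ := Qd_cos h
  unfold NN; positivity

lemma sg_cos {u v : ℝ} (h : |u| + |v| < π / 2) : Real.cos (sg u v) = Real.cos u / √(NN u v) := by
  obtain ⟨h1, h2⟩ := Qd_cos h
  have hN := NN_pos h
  unfold sg
  rw [Real.cos_arctan]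
  have : 1 + (Real.cos v / Real.cos u) ^ 2 = NN u v / Real.cos u ^ 2 := by
    unfold NN; field_simp
  rw [this, Real.sqrt_div hN.le, Real.sqrt_sq h1.le]
  field_simp

lemma sg_sin {u v : ℝ} (h : |u| + |v| < π / 2) : Real.sin (sg u v) = Real.cos v / √(NN u v) := by
  have := sg_cos (u := v) (v := u) (by linarith)
  rw [sg_swap h, Real.cos_pi_div_two_sub] at this
  rw [this]; unfold NN; rw [add_comm]

lemma sg_rel {u v : ℝ} (h : |u| + |v| < π / 2) :
    Real.sin (sg u v) * Real.cos u = Real.cos (sg u v) * Real.cos v := by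
  rw [sg_cos h, sg_sin h]; ring

lemma sg_eq {u v t : ℝ} (hu : 0 < Real.cos u) (h0 : 0 < t) (h1 : t < π / 2)
    (h : Real.sin t * Real.cos u = Real.cos t * Real.cos v) : sg u v = t := by
  have hc : 0 < Real.cos t := Real.cos_pos_of_mem_Ioo ⟨by linarith, by linarith⟩
  unfold sg
  rw [← Real.arctan_tan (x := t) (by linarith) (by linarith)]
  congr 1
  rw [Real.tan_eq_sin_div_cos, div_eq_div_iff hu.ne' hc.ne']
  linarith

lemma Phi_mem {p : ℝ × ℝ} (hp : p ∈ Qd) : Phi p ∈ Tri := by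
  obtain ⟨u, v⟩ := p
  have h : |u| + |v| < π / 2 := hp
  have h1 := sg_gt h
  have h2 := sg_lt h
  have := neg_abs_le u
  have := le_abs_self u
  have := neg_abs_le v
  have := le_abs_self v
  refine ⟨?_, ?_, ?_⟩ <;> simp only [Phi] <;> linarith

lemma h0_Phi {u v : ℝ} (h : |u| + |v| < π / 2) :
    h0 (2 * sg u v + 2 * u) (π + 2 * sg u v - 2 * v) = 2 * sg u v - 2 * u := by
  have h1 := sg_gt h
  have h2 := sg_lt h
  have n1 := neg_abs_le u
  have n2 := le_abs_self u
  have n3 := neg_abs_le v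
  have n4 := le_abs_self v
  set σ := sg u v with hσ
  have hrel : Real.sin σ * Real.cos u = Real.cos σ * Real.cos v := sg_rel h
  unfold h0
  rw [abs_of_pos (by linarith)]
  set q := π / 4 - (u + v) / 2 with hq
  set s := σ + π / 4 + (u - v) / 2 with hs
  set θ := σ - π / 4 - (u - v) / 2 with hθ
  rw [show (π + 2 * σ - 2 * v - (2 * σ + 2 * u)) / 4 = q by rw [hq]; ring,
    show (2 * σ + 2 * u + (π + 2 * σ - 2 * v)) / 4 = s by rw [hs]; ring]
  have hcq : 0 < Real.cos q := Real.cos_pos_of_mem_Ioo ⟨by linarith, by linarith⟩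
  have key : Real.tan q * Real.cos s = Real.sin θ := by
    rw [Real.tan_eq_sin_div_cos, div_mul_eq_mul_div, div_eq_iff hcq.ne']
    have i1 : Real.sin (σ - u) = Real.sin θ * Real.cos q + Real.cos θ * Real.sin q := by
      rw [← Real.sin_add]; congr 1; rw [hq, hθ]; ring
    have i2 : -Real.cos (σ + v) = Real.sin θ * Real.cos q - Real.cos θ * Real.sin q := by
      rw [← Real.sin_sub, ← Real.sin_sub_pi_div_two]; congr 1; rw [hq, hθ]; ring
    have i3 : Real.cos (σ - v) = Real.sin q * Real.cos s + Real.cos q * Real.sin s := by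
      rw [← Real.sin_add, ← Real.sin_add_pi_div_two]; congr 1; rw [hq, hs]; ring
    have i4 : -Real.sin (σ + u) = Real.sin q * Real.cos s - Real.cos q * Real.sin s := by
      rw [← Real.sin_sub, ← Real.sin_neg]; congr 1; rw [hq, hs]; ring
    rw [Real.sin_sub] at i1
    rw [Real.cos_add] at i2
    rw [Real.cos_sub] at i3
    rw [Real.sin_add] at i4
    linarith
  rw [key, Real.arcsin_sin (by linarith) (by linarith), hθ]
  ring

def PhiInv (p : ℝ × ℝ) : ℝ × ℝ :=
  ((p.1 - h0 p.1 p.2) / 4, π / 2 + (p.1 + h0 p.1 p.2 - 2 * p.2) / 4)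

lemma PhiInv_Phi {p : ℝ × ℝ} (hp : p ∈ Qd) : PhiInv (Phi p) = p := by
  obtain ⟨u, v⟩ := p
  simp only [PhiInv, Phi, h0_Phi (show |u| + |v| < π / 2 from hp)]
  ext <;> simp only <;> ring

lemma Phi_injOn : InjOn Phi Qd := by
  intro p hp q hq h
  rw [← PhiInv_Phi hp, ← PhiInv_Phi hq, h]

lemma Phi_surj {p : ℝ × ℝ} (hp : p ∈ Tri) : PhiInv p ∈ Qd ∧ Phi (PhiInv p) = p := by
  obtain ⟨x, z⟩ := p
  obtain ⟨hy0, hy1, hs⟩ := h0_tri hp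
  obtain ⟨hx, hxz, hz⟩ := hp
  simp only at *
  simp only [PhiInv]
  set y := h0 x z with hy
  set u := (x - y) / 4 with hu
  set v := π / 2 + (x + y - 2 * z) / 4 with hv
  have a1 : |u| < (x + y) / 4 := abs_lt.2 ⟨by rw [hu]; linarith, by rw [hu]; linarith⟩
  have a2 : |v| < π / 2 - (x + y) / 4 := abs_lt.2 ⟨by rw [hv]; linarith, by rw [hv]; linarith⟩
  have hQ : |u| + |v| < π / 2 := by linarith
  refine ⟨hQ, ?_⟩
  have hsg : sg u v = (x + y) / 4 := by
    apply sg_eq (Qd_cos hQ).1 (by linarith) (by linarith)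
    have i1 : Real.sin ((x + y) / 4) * Real.cos u + Real.cos ((x + y) / 4) * Real.sin u
        = Real.sin ((x + z) / 4) * Real.cos ((z - x) / 4)
          - Real.cos ((x + z) / 4) * Real.sin ((z - x) / 4) := by
      rw [← Real.sin_add, ← Real.sin_sub]; congr 1; rw [hu]; ring
    have i2 : Real.sin ((x + y) / 4) * Real.cos u - Real.cos ((x + y) / 4) * Real.sin u
        = Real.sin (y / 2 - (z - x) / 4) * Real.cos ((z - x) / 4)
          + Real.cos (y / 2 - (z - x) / 4) * Real.sin ((z - x) / 4) := by
      rw [← Real.sin_add, ← Real.sin_sub]; congr 1; rw [hu]; ring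
    have i3 : Real.cos ((x + y) / 4) * Real.cos v + Real.sin ((x + y) / 4) * Real.sin v
        = Real.sin ((x + z) / 4) * Real.cos ((z - x) / 4)
          + Real.cos ((x + z) / 4) * Real.sin ((z - x) / 4) := by
      rw [← Real.sin_add, ← Real.cos_sub, ← Real.cos_pi_div_two_sub, ← Real.cos_neg]
      congr 1; rw [hv]; ring
    have i4 : Real.cos ((x + y) / 4) * Real.cos v - Real.sin ((x + y) / 4) * Real.sin v
        = -(Real.sin (y / 2 - (z - x) / 4) * Real.cos ((z - x) / 4)
          - Real.cos (y / 2 - (z - x) / 4) * Real.sin ((z - x) / 4)) := by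
      rw [← Real.sin_sub, ← Real.cos_add, ← Real.cos_add_pi_div_two]
      congr 1; rw [hv]; ring
    linarith
  simp only [Phi, hsg]
  ext <;> simp only [hu, hv] <;> ring

lemma Phi_image : Phi '' Qd = Tri := by
  ext p
  constructor
  · rintro ⟨q, hq, rfl⟩; exact Phi_mem hq
  · intro hp; exact ⟨PhiInv p, (Phi_surj hp).1, (Phi_surj hp).2⟩

/-- linear map with given matrix -/
def mat2 (a b c d : ℝ) : ℝ × ℝ →L[ℝ] ℝ × ℝ :=
  (Matrix.toLin (.finTwoProd ℝ) (.finTwoProd ℝ) !![a, b; c, d]).toContinuousLinearMap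

lemma det_mat2 (a b c d : ℝ) : (mat2 a b c d).det = a * d - b * c := by
  unfold mat2
  simp only [LinearMap.det_toContinuousLinearMap, LinearMap.det_toLin, Matrix.det_fin_two_of]

lemma hasFDerivAt_mat2 {F G : ℝ × ℝ → ℝ} {a b c d : ℝ} {p : ℝ × ℝ}
    (hF : HasFDerivAt F (a • ContinuousLinearMap.fst ℝ ℝ ℝ + b • ContinuousLinearMap.snd ℝ ℝ ℝ) p)
    (hG : HasFDerivAt G (c • ContinuousLinearMap.fst ℝ ℝ ℝ + d • ContinuousLinearMap.snd ℝ ℝ ℝ) p) :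
    HasFDerivAt (fun q => (F q, G q)) (mat2 a b c d) p := by
  unfold mat2
  rw [Matrix.toLin_finTwoProd_toContinuousLinearMap]
  exact hF.prodMk hG

def su (p : ℝ × ℝ) : ℝ := Real.cos p.2 * Real.sin p.1 / NN p.1 p.2
def sv (p : ℝ × ℝ) : ℝ := -(Real.sin p.2 * Real.cos p.1 / NN p.1 p.2)

lemma hasFDerivAt_sg {p : ℝ × ℝ} (hp : p ∈ Qd) :
    HasFDerivAt (fun q : ℝ × ℝ => sg q.1 q.2)
      (su p • ContinuousLinearMap.fst ℝ ℝ ℝ + sv p • ContinuousLinearMap.snd ℝ ℝ ℝ) p := by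
  obtain ⟨h1, h2⟩ := Qd_cos hp
  have hN := NN_pos hp
  have d1 : HasFDerivAt (fun q : ℝ × ℝ => Real.cos q.2) (-Real.sin p.2 • ContinuousLinearMap.snd ℝ ℝ ℝ) p :=
    (Real.hasDerivAt_cos p.2).comp_hasFDerivAt p hasFDerivAt_snd
  have d2 : HasFDerivAt (fun q : ℝ × ℝ => Real.cos q.1) (-Real.sin p.1 • ContinuousLinearMap.fst ℝ ℝ ℝ) p :=
    (Real.hasDerivAt_cos p.1).comp_hasFDerivAt p hasFDerivAt_fst
  have d3 := (Real.hasDerivAt_arctan (Real.cos p.2 / Real.cos p.1)).comp_hasFDerivAt p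
    (d1.mul ((hasDerivAt_inv h1.ne').comp_hasFDerivAt p d2))
  refine d3.congr_fderiv ?_
  unfold NN at hN
  ext
  · simp [su, NN]; field_simp
  · simp [sv, NN]; field_simp

lemma hasFDerivAt_Phi {p : ℝ × ℝ} (hp : p ∈ Qd) :
    HasFDerivAt Phi (mat2 (2 * su p + 2) (2 * sv p) (2 * su p) (2 * sv p - 2)) p := by
  have h := hasFDerivAt_sg hp
  apply hasFDerivAt_mat2
  · refine ((h.const_mul 2).add (hasFDerivAt_fst.const_mul 2)).congr_fderiv ?_
    ext <;> simp
  · refine (((h.const_mul 2).const_add π).sub (hasFDerivAt_snd.const_mul 2)).congr_fderiv ?_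
    ext <;> simp

lemma hasFDerivAt_Psi {p : ℝ × ℝ} (hp : p ∈ Qd) :
    HasFDerivAt Psi (mat2 (2 * su p + 2) (2 * sv p) (2 * su p - 2) (2 * sv p)) p := by
  have h := hasFDerivAt_sg hp
  apply hasFDerivAt_mat2
  · refine ((h.const_mul 2).add (hasFDerivAt_fst.const_mul 2)).congr_fderiv ?_
    ext <;> simp
  · refine ((h.const_mul 2).sub (hasFDerivAt_fst.const_mul 2)).congr_fderiv ?_
    ext <;> simp

lemma sqrt_Fp_Phi {u v : ℝ} (h : |u| + |v| < π / 2) :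
    √(Fp (Phi (u, v)).1 (Phi (u, v)).2) = (NN u v + Real.sin u * Real.cos v + Real.cos u * Real.sin v) / √(NN u v) := by
  have hc := cos_h0 (Phi_mem (p := (u, v)) h)
  have hN := NN_pos h
  simp only [Phi] at hc ⊢
  rw [h0_Phi h] at hc
  set σ := sg u v with hσ
  have e1 : 2 * (Real.cos ((π + 2 * σ - 2 * v - (2 * σ + 2 * u)) / 4) *
    Real.cos ((2 * σ - 2 * u) / 2 - (π + 2 * σ - 2 * v - (2 * σ + 2 * u)) / 4))
     = Real.cos (σ - u) + Real.sin (σ + v) := by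
    rw [← mul_assoc, Real.two_mul_cos_mul_cos, ← Real.cos_sub_pi_div_two]
    rw [add_comm]
    congr 1
    · congr 1; ring
    · rw [← Real.cos_neg]; congr 1; ring
  rw [hc] at e1
  rw [show √(Fp (2 * σ + 2 * u) (π + 2 * σ - 2 * v)) = 2 * (√(Fp (2 * σ + 2 * u) (π + 2 * σ - 2 * v)) / 2) by ring, e1, Real.cos_sub, Real.sin_add, hσ, sg_sin h, sg_cos h]
  have : √(NN u v) ≠ 0 := by positivity
  field_simp
  unfold NN; ring

lemma Phi_weight {p : ℝ × ℝ} (hp : p ∈ Qd) :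
    |(mat2 (2 * su p + 2) (2 * sv p) (2 * su p) (2 * sv p - 2)).det| *
      (1 / (2 * √(Fp (Phi p).1 (Phi p).2))) = mQ p.1 p.2 := by
  obtain ⟨u, v⟩ := p
  have h : |u| + |v| < π / 2 := hp
  have hN := NN_pos h
  have hF := Real.sqrt_pos.2 (Fp_pos (x := (Phi (u,v)).1) (z := (Phi (u,v)).2) (Phi_mem hp))
  rw [sqrt_Fp_Phi h] at hF ⊢
  have hsN : 0 < √(NN u v) := by positivity
  have hM : 0 < NN u v + Real.sin u * Real.cos v + Real.cos u * Real.sin v := by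
    by_contra hcon
    push Not at hcon
    exact absurd hF (not_lt.2 (div_nonpos_of_nonpos_of_nonneg hcon hsN.le))
  rw [det_mat2]
  have e : (2 * su (u, v) + 2) * (2 * sv (u, v) - 2) - 2 * sv (u, v) * (2 * su (u, v))
      = -(4 * ((NN u v + Real.sin u * Real.cos v + Real.cos u * Real.sin v) / NN u v)) := by
    simp only [su, sv]; field_simp; ring
  rw [e, abs_neg, abs_of_pos (by positivity)]
  unfold mQ
  simp only
  have hs2 : √(NN u v) ^ 2 = NN u v := Real.sq_sqrt hN.le
  generalize NN u v + Real.sin u * Real.cos v + Real.cos u * Real.sin v = M at *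
  field_simp
  rw [hs2]; ring

lemma Phi_integrable_iff (G : ℝ × ℝ → ℂ) :
    IntegrableOn (fun p => ((1 / (2 * √(Fp p.1 p.2)) : ℝ) : ℂ) * G p) Tri ↔
    IntegrableOn (fun p => ((mQ p.1 p.2 : ℝ) : ℂ) * G (Phi p)) Qd := by
  rw [← Phi_image, integrableOn_image_iff_integrableOn_abs_det_fderiv_smul volume
    isOpen_Qd.measurableSet (fun p hp => (hasFDerivAt_Phi hp).hasFDerivWithinAt) Phi_injOn]
  apply integrableOn_congr_fun _ isOpen_Qd.measurableSet
  intro p hp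
  simp only
  rw [← Phi_weight hp, Complex.real_smul]
  push_cast; ring

lemma Phi_integral (G : ℝ × ℝ → ℂ) :
    ∫ p in Tri, ((1 / (2 * √(Fp p.1 p.2)) : ℝ) : ℂ) * G p =
    ∫ p in Qd, ((mQ p.1 p.2 : ℝ) : ℂ) * G (Phi p) := by
  rw [← Phi_image, integral_image_eq_integral_abs_det_fderiv_smul volume
    isOpen_Qd.measurableSet (fun p hp => (hasFDerivAt_Phi hp).hasFDerivWithinAt) Phi_injOn]
  apply setIntegral_congr_fun isOpen_Qd.measurableSet
  intro p hp
  simp only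
  rw [← Phi_weight hp, Complex.real_smul]
  push_cast; ring

/- Second map -/

lemma Fm_eq (σ u : ℝ) : Fm (2 * σ + 2 * u) (2 * σ - 2 * u)
    = 4 * (Real.cos σ ^ 2 - Real.sin σ ^ 2 * Real.cos u ^ 2) := by
  unfold Fm
  rw [show (2 * σ + 2 * u) / 2 = σ + u by ring, show (2 * σ - 2 * u) / 2 = σ - u by ring]
  simp only [Real.cos_sub, Real.cos_add, Real.sin_sub, Real.sin_add]
  have h1 := Real.sin_sq_add_cos_sq σ
  have h2 := Real.sin_sq_add_cos_sq u
  linear_combination (4 * Real.cos σ ^ 2) * h2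

lemma sqrt_Fm_Psi {u v : ℝ} (h : |u| + |v| < π / 2) (hv : 0 < v) :
    0 < Real.sin v ∧ 0 < Fm (Psi (u, v)).1 (Psi (u, v)).2 ∧
    √(Fm (Psi (u, v)).1 (Psi (u, v)).2) = 2 * Real.cos u * Real.sin v / √(NN u v) := by
  obtain ⟨h1, h2⟩ := Qd_cos h
  have hN := NN_pos h
  have n4 := le_abs_self v
  have n5 := abs_nonneg u
  have hs : 0 < Real.sin v := Real.sin_pos_of_pos_of_lt_pi hv (by linarith [Real.pi_pos])
  have e : Fm (Psi (u, v)).1 (Psi (u, v)).2 = (2 * Real.cos u * Real.sin v / √(NN u v)) ^ 2 := by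
    simp only [Psi]
    rw [Fm_eq, sg_cos h, sg_sin h, div_pow, div_pow, div_pow, Real.sq_sqrt hN.le]
    field_simp
    have := Real.sin_sq_add_cos_sq v
    linear_combination (-4 : ℝ) * this
  refine ⟨hs, by rw [e]; positivity, by rw [e, Real.sqrt_sq (by positivity)]⟩

lemma Psi_injOn : InjOn Psi QdP := by
  rintro ⟨u, v⟩ ⟨hp, hv⟩ ⟨u', v'⟩ ⟨hq, hv'⟩ h
  simp only [Psi, Prod.mk.injEq] at h hp hq hv hv'
  have hu : u = u' := by linarith [h.1, h.2]
  subst hu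
  have hs : sg u v = sg u v' := by linarith [h.1]
  have hc := (Qd_cos hp).1
  have : Real.cos v = Real.cos v' := by
    have := Real.arctan_injective hs
    field_simp at this
    exact this
  have n1 := le_abs_self v
  have n2 := le_abs_self v'
  have n5 := abs_nonneg u
  have pp := Real.pi_pos
  have := Real.injOn_cos ⟨hv.le, by linarith⟩ ⟨hv'.le, by linarith⟩ this
  rw [this]

lemma Psi_image : Psi '' QdP = DD := by
  ext p
  constructor
  · rintro ⟨⟨u, v⟩, ⟨hq, hv⟩, rfl⟩
    simp only at hq hv
    have h1 := sg_gt hq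
    have h2 := sg_lt hq
    have n1 := neg_abs_le u
    have n2 := le_abs_self u
    have n3 := abs_nonneg v
    refine ⟨?_, ?_, ?_, (sqrt_Fm_Psi hq hv).2.1⟩ <;> simp only [Psi] <;> linarith
  · obtain ⟨x, y⟩ := p
    rintro ⟨hx, hy, hxy, hF⟩
    simp only at hx hy hxy hF
    set σ := (x + y) / 4 with hσ
    set u := (x - y) / 4 with hu
    have hxe : x = 2 * σ + 2 * u := by rw [hσ, hu]; ring
    have hye : y = 2 * σ - 2 * u := by rw [hσ, hu]; ring
    rw [hxe, hye, Fm_eq] at hF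
    have a1 : |u| < σ := abs_lt.2 ⟨by linarith, by linarith⟩
    have a0 := abs_nonneg u
    have s0 : 0 < σ := by linarith
    have s1 : σ < π / 2 := by linarith
    have cσ : 0 < Real.cos σ := Real.cos_pos_of_mem_Ioo ⟨by linarith, by linarith⟩
    have sσ : 0 < Real.sin σ := Real.sin_pos_of_pos_of_lt_pi (by linarith) (by linarith)
    have cu : 0 < Real.cos u := Real.cos_pos_of_mem_Ioo (abs_lt.1 (by linarith))
    have lt1 : Real.sin σ * Real.cos u / Real.cos σ < 1 := by
      rw [div_lt_one cσ]
      by_contra hcon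
      push Not at hcon
      nlinarith
    have gt0 : 0 < Real.sin σ * Real.cos u / Real.cos σ := by positivity
    set v := Real.arccos (Real.sin σ * Real.cos u / Real.cos σ) with hv
    have v0 : 0 < v := Real.arccos_pos.2 lt1
    have v1 : v < π / 2 := Real.arccos_lt_pi_div_two.2 gt0
    have cv : Real.cos v = Real.sin σ * Real.cos u / Real.cos σ :=
      Real.cos_arccos (by linarith) lt1.le
    have hQ : |u| + |v| < π / 2 := by
      rw [abs_of_pos v0]
      have : Real.cos (π / 2 - |u|) < Real.cos v := by
        rw [Real.cos_pi_div_two_sub, cv, lt_div_iff₀ cσ]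
        have : 0 < Real.sin (σ - |u|) :=
          Real.sin_pos_of_pos_of_lt_pi (by linarith) (by linarith)
        rw [Real.sin_sub, Real.cos_abs] at this
        linarith
      by_contra hcon
      push Not at hcon
      have := Real.cos_le_cos_of_nonneg_of_le_pi (x := π / 2 - |u|) (y := v) (by linarith) (by linarith)
        (by linarith)
      linarith
    have hsg : sg u v = σ := by
      apply sg_eq cu s0 s1
      rw [cv]; field_simp
    refine ⟨(u, v), ⟨hQ, v0⟩, ?_⟩
    simp only [Psi, hsg]
    rw [← hxe, ← hye]

lemma Psi_weight {p : ℝ × ℝ} (hp : p ∈ QdP) :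
    |(mat2 (2 * su p + 2) (2 * sv p) (2 * su p - 2) (2 * sv p)).det| *
      (K1 (Psi p).1 (Psi p).2) = 8 * mQ p.1 p.2 := by
  obtain ⟨u, v⟩ := p
  obtain ⟨h, hv⟩ := hp
  simp only at h hv
  have hN := NN_pos h
  obtain ⟨h1, h2⟩ := Qd_cos h
  obtain ⟨hs, hF, hF2⟩ := sqrt_Fm_Psi h hv
  unfold K1
  rw [if_pos hF, hF2, det_mat2]
  have hsN : 0 < √(NN u v) := by positivity
  have e : (2 * su (u, v) + 2) * (2 * sv (u, v)) - 2 * sv (u, v) * (2 * su (u, v) - 2)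
      = -(8 * (Real.sin v * Real.cos u / NN u v)) := by
    simp only [su, sv]; field_simp; ring
  rw [e, abs_neg, abs_of_pos (by positivity)]
  unfold mQ
  simp only
  have hs2 : √(NN u v) ^ 2 = NN u v := Real.sq_sqrt hN.le
  field_simp
  rw [hs2]; ring

lemma QdP_sub : QdP ⊆ Qd := fun _ h => h.1

lemma Psi_integrable_iff (G : ℝ × ℝ → ℂ) :
    IntegrableOn (fun p => ((K1 p.1 p.2 : ℝ) : ℂ) * G p) DD ↔
    IntegrableOn (fun p => ((8 * mQ p.1 p.2 : ℝ) : ℂ) * G (Psi p)) QdP := by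
  rw [← Psi_image, integrableOn_image_iff_integrableOn_abs_det_fderiv_smul volume
    isOpen_QdP.measurableSet (fun p hp => (hasFDerivAt_Psi (QdP_sub hp)).hasFDerivWithinAt) Psi_injOn]
  apply integrableOn_congr_fun _ isOpen_QdP.measurableSet
  intro p hp
  simp only
  rw [← Psi_weight hp, Complex.real_smul]
  push_cast; ring

lemma Psi_integral (G : ℝ × ℝ → ℂ) :
    ∫ p in DD, ((K1 p.1 p.2 : ℝ) : ℂ) * G p =
    ∫ p in QdP, ((8 * mQ p.1 p.2 : ℝ) : ℂ) * G (Psi p) := by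
  rw [← Psi_image, integral_image_eq_integral_abs_det_fderiv_smul volume
    isOpen_QdP.measurableSet (fun p hp => (hasFDerivAt_Psi (QdP_sub hp)).hasFDerivWithinAt) Psi_injOn]
  apply setIntegral_congr_fun isOpen_QdP.measurableSet
  intro p hp
  simp only
  rw [← Psi_weight hp, Complex.real_smul]
  push_cast; ring

instance haarR2 : Measure.IsAddHaarMeasure (volume : Measure (ℝ × ℝ)) :=
  Measure.prod.instIsAddHaarMeasure _ _

def cR : ℝ × ℝ := (2 * π, 2 * π)
def TriR : Set (ℝ × ℝ) := {p | 0 < p.2 ∧ p.2 < p.1 ∧ p.1 < 2 * π}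
def DDR : Set (ℝ × ℝ) := {p | cR - p ∈ DD}

lemma emb_subLeft {G : Type*} [AddCommGroup G] [MeasurableSpace G] [MeasurableAdd G] [MeasurableNeg G] (c : G) :
    MeasurableEmbedding (fun p : G => c - p) :=
  (MeasurableEquiv.subLeft c).measurableEmbedding

lemma refl_mp : MeasurePreserving (fun p : ℝ × ℝ => cR - p) volume volume :=
  (volume : Measure (ℝ × ℝ)).measurePreserving_sub_left cR

lemma refl_setIntegral {E : Type*} [NormedAddCommGroup E] [NormedSpace ℝ E]
    (S : Set (ℝ × ℝ)) (F : ℝ × ℝ → E) :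
    ∫ p in {p | cR - p ∈ S}, F (cR - p) = ∫ p in S, F p :=
  refl_mp.setIntegral_preimage_emb (emb_subLeft cR) F S

lemma refl_integrableOn {E : Type*} [NormedAddCommGroup E]
    (S : Set (ℝ × ℝ)) (F : ℝ × ℝ → E) :
    IntegrableOn (fun p => F (cR - p)) {p | cR - p ∈ S} ↔ IntegrableOn F S :=
  refl_mp.integrableOn_comp_preimage (emb_subLeft cR)

lemma TriR_eq_refl : TriR = {p | cR - p ∈ Tri} := by
  ext ⟨x, z⟩
  simp only [TriR, Tri, cR, mem_ofPred_eq, Prod.mk_sub_mk]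
  constructor <;> rintro ⟨a, b, c⟩ <;> refine ⟨?_, ?_, ?_⟩ <;> linarith

lemma swap_setIntegral {E : Type*} [NormedAddCommGroup E] [NormedSpace ℝ E]
    (F : ℝ × ℝ → E) : ∫ p in TriR, F p = ∫ p in Tri, F (p.2, p.1) := by
  have h : MeasurePreserving (Prod.swap : ℝ × ℝ → ℝ × ℝ) volume volume :=
    Measure.measurePreserving_swap
  exact (h.setIntegral_preimage_emb MeasurableEquiv.prodComm.measurableEmbedding F TriR).symm

lemma diag_null : volume {p : ℝ × ℝ | p.1 = p.2} = 0 := by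
  have hm : MeasurableSet {p : ℝ × ℝ | p.1 = p.2} := measurableSet_eq_fun measurable_fst measurable_snd
  rw [Measure.volume_eq_prod, Measure.measure_prod_null hm]
  refine Eventually.of_forall fun x => ?_
  have : Prod.mk x ⁻¹' {p : ℝ × ℝ | p.1 = p.2} = {x} := by
    ext y; simp [eq_comm]
  simp [this]

lemma Tri_sub : Tri ⊆ Ioo 0 (2 * π) ×ˢ Ioo 0 (2 * π) := by
  rintro ⟨x, z⟩ ⟨a, b, c⟩
  simp only at a b c
  exact ⟨⟨a, by simp only; linarith⟩, ⟨by simp only; linarith, c⟩⟩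

lemma TriR_sub : TriR ⊆ Ioo 0 (2 * π) ×ˢ Ioo 0 (2 * π) := by
  rintro ⟨x, z⟩ ⟨a, b, c⟩
  simp only at a b c
  exact ⟨⟨by simp only; linarith, c⟩, ⟨a, by simp only; linarith⟩⟩

lemma Ioo_sub : (Ioo 0 (2 * π) ×ˢ Ioo 0 (2 * π) : Set (ℝ × ℝ)) ⊆ II ×ˢ II :=
  prod_mono Ioo_subset_Ico_self Ioo_subset_Ico_self

lemma Tri_union_ae : (II ×ˢ II : Set (ℝ × ℝ)) =ᵐ[volume] (Tri ∪ TriR : Set (ℝ × ℝ)) := by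
  refine II2_ae.trans ?_
  have h : ∀ᵐ p : ℝ × ℝ, p.1 ≠ p.2 := by
    rw [ae_iff]; simpa using diag_null
  filter_upwards [h] with p hp
  apply propext
  obtain ⟨x, z⟩ := p
  constructor
  · rintro ⟨hx, hz⟩
    rcases lt_or_gt_of_ne hp with h | h
    · exact Or.inl ⟨hx.1, h, hz.2⟩
    · exact Or.inr ⟨hz.1, h, hx.2⟩
  · rintro (h | h)
    · exact Tri_sub h
    · exact TriR_sub h

lemma isOpen_TriR : IsOpen TriR :=
  (isOpen_lt continuous_const continuous_snd).inter
    ((isOpen_lt continuous_snd continuous_fst).inter (isOpen_lt continuous_fst continuous_const))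

lemma split_II2 {E : Type*} [NormedAddCommGroup E] [NormedSpace ℝ E]
    (F : ℝ × ℝ → E) (hF : IntegrableOn F (II ×ˢ II)) :
    ∫ p in II ×ˢ II, F p = (∫ p in Tri, F p) + ∫ p in TriR, F p := by
  rw [setIntegral_congr_set Tri_union_ae]
  apply setIntegral_union
  · rw [Set.disjoint_left]
    rintro ⟨x, z⟩ ⟨_, h, _⟩ ⟨_, h', _⟩
    exact lt_asymm h h'
  · exact isOpen_TriR.measurableSet
  · exact hF.mono_set (Tri_sub.trans Ioo_sub)
  · exact hF.mono_set (TriR_sub.trans Ioo_sub)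

/- Boundedness -/
lemma bdd_of_lip {f : ℝ → ℂ} {K : NNReal} (hper : Function.Periodic f (2 * π))
    (hlip : LipschitzWith K f) : ∃ B : ℝ, 0 ≤ B ∧ ∀ x, ‖f x‖ ≤ B := by
  refine ⟨‖f 0‖ + K * (2 * π), by positivity, fun x => ?_⟩
  obtain ⟨y, hy, hxy⟩ := hper.exists_mem_Ico₀ (by positivity) x
  rw [hxy]
  have h1 : ‖f y - f 0‖ ≤ K * ‖y - 0‖ := by
    have := hlip.dist_le_mul y 0
    rwa [dist_eq_norm, dist_eq_norm] at this
  have h2 : ‖y - 0‖ ≤ 2 * π := by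
    rw [sub_zero, Real.norm_of_nonneg hy.1]; exact hy.2.le
  have h3 : ‖f y‖ ≤ ‖f 0‖ + ‖f y - f 0‖ := by
    have := norm_add_le (f 0) (f y - f 0); simpa using this
  have : (K : ℝ) * ‖y - 0‖ ≤ K * (2 * π) := by gcongr
  linarith

lemma integrableOn_mQ : IntegrableOn (fun p : ℝ × ℝ => ((mQ p.1 p.2 : ℝ) : ℂ)) Qd := by
  have h := (Phi_integrable_iff (fun _ => 1)).1 ?_
  · simpa using h
  · have := (integrableOn_inv_sqrt_Fp.mono_set (Tri_sub.trans Ioo_sub)).const_mul (1/2)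
    have := Integrable.ofReal (𝕜 := ℂ) this
    refine this.congr (Eventually.of_forall fun p => ?_)
    simp only [mul_one]
    rw [one_div_mul_one_div]
    norm_num

lemma intQ {φ : ℝ × ℝ → ℂ} {C : ℝ} (hm : Measurable φ) (hb : ∀ p, ‖φ p‖ ≤ C) :
    IntegrableOn (fun p => ((mQ p.1 p.2 : ℝ) : ℂ) * φ p) Qd :=
  Integrable.mul_bdd integrableOn_mQ hm.aestronglyMeasurable (Eventually.of_forall hb)

def JJ (φ : ℝ × ℝ → ℂ) : ℂ := ∫ p in Qd, ((mQ p.1 p.2 : ℝ) : ℂ) * φ p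

def flu : ℝ × ℝ ≃ᵐ ℝ × ℝ := (MeasurableEquiv.neg ℝ).prodCongr (MeasurableEquiv.refl ℝ)
def flv : ℝ × ℝ ≃ᵐ ℝ × ℝ := (MeasurableEquiv.refl ℝ).prodCongr (MeasurableEquiv.neg ℝ)

lemma flu_mp : MeasurePreserving flu volume volume :=
  (Measure.measurePreserving_neg (volume : Measure ℝ)).prod (MeasurePreserving.id _)
lemma flv_mp : MeasurePreserving flv volume volume :=
  (MeasurePreserving.id _).prod (Measure.measurePreserving_neg (volume : Measure ℝ))

lemma mQ_neg_left (u v : ℝ) : mQ (-u) v = mQ u v := by simp [mQ, NN]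
lemma mQ_neg_right (u v : ℝ) : mQ u (-v) = mQ u v := by simp [mQ, NN]
lemma mQ_swap (u v : ℝ) : mQ v u = mQ u v := by simp [mQ, NN, add_comm]
lemma sg_neg_left (u v : ℝ) : sg (-u) v = sg u v := by simp [sg]
lemma sg_neg_right (u v : ℝ) : sg u (-v) = sg u v := by simp [sg]

lemma JJ_u (φ : ℝ × ℝ → ℂ) : JJ (fun p => φ (-p.1, p.2)) = JJ φ := by
  have := flu_mp.setIntegral_preimage_emb flu.measurableEmbedding
    (fun p => ((mQ p.1 p.2 : ℝ) : ℂ) * φ p) Qd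
  have hs : flu ⁻¹' Qd = Qd := by
    ext ⟨u, v⟩
    show |-u| + |v| < π / 2 ↔ |u| + |v| < π / 2
    rw [abs_neg]
  rw [hs] at this
  unfold JJ
  rw [← this]
  congr 1; ext p
  show _ = ((mQ (-p.1) p.2 : ℝ) : ℂ) * φ (-p.1, p.2)
  rw [mQ_neg_left]

lemma JJ_v (φ : ℝ × ℝ → ℂ) : JJ (fun p => φ (p.1, -p.2)) = JJ φ := by
  have := flv_mp.setIntegral_preimage_emb flv.measurableEmbedding
    (fun p => ((mQ p.1 p.2 : ℝ) : ℂ) * φ p) Qd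
  have hs : flv ⁻¹' Qd = Qd := by
    ext ⟨u, v⟩
    show |u| + |-v| < π / 2 ↔ |u| + |v| < π / 2
    rw [abs_neg]
  rw [hs] at this
  unfold JJ
  rw [← this]
  congr 1; ext p
  show _ = ((mQ p.1 (-p.2) : ℝ) : ℂ) * φ (p.1, -p.2)
  rw [mQ_neg_right]

lemma JJ_swap (φ : ℝ × ℝ → ℂ) : JJ (fun p => φ (p.2, p.1)) = JJ φ := by
  have h : MeasurePreserving (Prod.swap : ℝ × ℝ → ℝ × ℝ) volume volume :=
    Measure.measurePreserving_swap
  have := h.setIntegral_preimage_emb MeasurableEquiv.prodComm.measurableEmbedding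
    (fun p => ((mQ p.1 p.2 : ℝ) : ℂ) * φ p) Qd
  have hs : (Prod.swap : ℝ × ℝ → ℝ × ℝ) ⁻¹' Qd = Qd := by
    ext ⟨u, v⟩
    show |v| + |u| < π / 2 ↔ |u| + |v| < π / 2
    rw [add_comm]
  rw [hs] at this
  unfold JJ
  rw [← this]
  congr 1; ext p
  show _ = ((mQ p.2 p.1 : ℝ) : ℂ) * φ (p.2, p.1)
  rw [mQ_swap]

lemma JJ_even {φ : ℝ × ℝ → ℂ} {C : ℝ} (hm : Measurable φ) (hb : ∀ p, ‖φ p‖ ≤ C)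
    (he : ∀ u v, φ (u, -v) = φ (u, v)) :
    JJ φ = 2 * ∫ p in QdP, ((mQ p.1 p.2 : ℝ) : ℂ) * φ p := by
  have hI := intQ hm hb
  have e1 : (Qd : Set (ℝ × ℝ)) =ᵐ[volume] (QdP ∪ flv ⁻¹' QdP : Set (ℝ × ℝ)) := by
    have h : ∀ᵐ p : ℝ × ℝ, p.2 ≠ 0 := by
      rw [ae_iff]
      have : {a : ℝ × ℝ | ¬ a.2 ≠ 0} = univ ×ˢ {0} := by ext ⟨a, b⟩; simp
      rw [this, Measure.volume_eq_prod, Measure.prod_prod]; simp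
    filter_upwards [h] with p hp
    apply propext
    obtain ⟨u, v⟩ := p
    show |u| + |v| < π / 2 ↔ (|u| + |v| < π / 2 ∧ 0 < v) ∨ (|u| + |-v| < π / 2 ∧ 0 < -v)
    rw [abs_neg]
    rcases lt_or_gt_of_ne hp with h | h
    · simp only at h
      have : 0 < -v := by linarith
      tauto
    · simp only at h
      tauto
  have sub2 : flv ⁻¹' QdP ⊆ Qd := by
    rintro ⟨u, v⟩ h
    have h : |u| + |-v| < π / 2 ∧ 0 < -v := h
    rw [abs_neg] at h
    exact h.1
  unfold JJ
  rw [setIntegral_congr_set e1, setIntegral_union _ (flv.measurable isOpen_QdP.measurableSet)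
    (hI.mono_set QdP_sub) (hI.mono_set sub2)]
  · have := flv_mp.setIntegral_preimage_emb flv.measurableEmbedding
      (fun p => ((mQ p.1 p.2 : ℝ) : ℂ) * φ p) QdP
    rw [two_mul]
    congr 1
    rw [← this]
    congr 1; ext p
    show _ = ((mQ p.1 (-p.2) : ℝ) : ℂ) * φ (p.1, -p.2)
    rw [mQ_neg_right, he]
  · rw [Set.disjoint_left]
    rintro ⟨u, v⟩ ⟨_, h⟩ h'
    have h' : |u| + |-v| < π / 2 ∧ 0 < -v := h'
    simp only at h
    linarith [h'.2]

def HH (f : ℝ → ℂ) (s t : ℝ) : ℂ := conj (f s) * f t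
def cA (p : ℝ × ℝ) : ℝ := 2 * sg p.1 p.2 + 2 * p.1
def cB (p : ℝ × ℝ) : ℝ := 2 * sg p.1 p.2 - 2 * p.1
def cC (p : ℝ × ℝ) : ℝ := π + 2 * sg p.1 p.2 - 2 * p.2
def cD (p : ℝ × ℝ) : ℝ := π + 2 * sg p.1 p.2 + 2 * p.2

lemma mA : Measurable cA := (measurable_sg.const_mul 2).add (measurable_fst.const_mul 2)
lemma mB : Measurable cB := (measurable_sg.const_mul 2).sub (measurable_fst.const_mul 2)
lemma mC : Measurable cC := ((measurable_sg.const_mul 2).const_add π).sub (measurable_snd.const_mul 2)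
lemma mD : Measurable cD := ((measurable_sg.const_mul 2).const_add π).add (measurable_snd.const_mul 2)

lemma mHH {α : Type*} [MeasurableSpace α] {f : ℝ → ℂ} (hf : Continuous f) {a b : α → ℝ}
    (ha : Measurable a) (hb : Measurable b) : Measurable (fun p => HH f (a p) (b p)) :=
  ((Complex.continuous_conj.comp hf).measurable.comp ha).mul (hf.measurable.comp hb)

lemma HH_bd {f : ℝ → ℂ} {B : ℝ} (hB : ∀ x, ‖f x‖ ≤ B) (s t : ℝ) : ‖HH f s t‖ ≤ B * B := by
  unfold HH
  rw [norm_mul, RCLike.norm_conj]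
  have := (norm_nonneg _).trans (hB 0)
  exact mul_le_mul (hB s) (hB t) (norm_nonneg _) this

lemma HH_integrableQ {f : ℝ → ℂ} (hf : Continuous f) {B : ℝ} (hB : ∀ x, ‖f x‖ ≤ B)
    {a b : ℝ × ℝ → ℝ} (ha : Measurable a) (hb : Measurable b) :
    IntegrableOn (fun p => ((mQ p.1 p.2 : ℝ) : ℂ) * HH f (a p) (b p)) Qd :=
  intQ (mHH hf ha hb) (fun _ => HH_bd hB _ _)

/-- integrand of the limiting form -/
def eI (f : ℝ → ℂ) (p : ℝ × ℝ) : ℝ := (1 / (2 * Real.sqrt (Fp p.1 p.2))) *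
      ‖f p.1 + f (hFPU p.1 p.2) - f p.2 - f (p.1 - p.2 + hFPU p.1 p.2)‖ ^ 2
def eI0 (f : ℝ → ℂ) (p : ℝ × ℝ) : ℝ := (1 / (2 * Real.sqrt (Fp p.1 p.2))) *
      ‖f p.1 + f (h0 p.1 p.2) - f p.2 - f (p.1 - p.2 + h0 p.1 p.2)‖ ^ 2

lemma eI_eq (f : ℝ → ℂ) {p : ℝ × ℝ} (hp : p ∈ II ×ˢ II) : eI f p = eI0 f p := by
  unfold eI eI0; rw [hFPU_eq hp.1 hp.2]

lemma mII2 : MeasurableSet (II ×ˢ II : Set (ℝ × ℝ)) := measurableSet_Ico.prod measurableSet_Ico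

lemma eI0_integrable {f : ℝ → ℂ} (hf : Continuous f) {B : ℝ} (hB : ∀ x, ‖f x‖ ≤ B) :
    IntegrableOn (eI0 f) (II ×ˢ II) := by
  have h1 := integrableOn_inv_sqrt_Fp.const_mul (1/2)
  have hm : Measurable (fun p : ℝ × ℝ =>
      ‖f p.1 + f (h0 p.1 p.2) - f p.2 - f (p.1 - p.2 + h0 p.1 p.2)‖ ^ 2) := by
    have m := measurable_h0
    have m1 := hf.measurable.comp m
    have m2 := hf.measurable.comp ((measurable_fst.sub measurable_snd).add m)
    have m3 : Measurable (fun p : ℝ × ℝ => f p.1) := hf.measurable.comp measurable_fst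
    have m4 : Measurable (fun p : ℝ × ℝ => f p.2) := hf.measurable.comp measurable_snd
    exact (((m3.add m1).sub m4).sub m2).norm.pow_const 2
  have h2 := Integrable.mul_bdd (c := (4 * B) ^ 2) h1 hm.aestronglyMeasurable
    (Eventually.of_forall fun p => by
      rw [Real.norm_of_nonneg (by positivity)]
      gcongr
      refine (norm_sub_le _ _).trans ?_
      have h3 := norm_sub_le (f p.1 + f (h0 p.1 p.2)) (f p.2)
      have h4 := norm_add_le (f p.1) (f (h0 p.1 p.2))
      linarith [hB p.1, hB p.2, hB (h0 p.1 p.2), hB (p.1 - p.2 + h0 p.1 p.2)])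
  refine h2.congr (Eventually.of_forall fun p => ?_)
  simp only [eI0]
  rw [one_div_mul_one_div]

lemma eI_integrable {f : ℝ → ℂ} (hf : Continuous f) {B : ℝ} (hB : ∀ x, ‖f x‖ ≤ B) :
    IntegrableOn (eI f) (II ×ˢ II) :=
  (integrableOn_congr_fun (fun _ hp => eI_eq f hp) mII2).2 (eI0_integrable hf hB)

def ET (f : ℝ → ℂ) : ℝ := ∫ p in Tri, eI0 f p

lemma Elim_split {f : ℝ → ℂ} (hper : Function.Periodic f (2 * π))
    (hf : Continuous f) {B : ℝ} (hB : ∀ x, ‖f x‖ ≤ B) :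
    Elim f = ET f + ET (fun x => f (-x)) := by
  have h1 : Elim f = ∫ p in II ×ˢ II, eI0 f p :=
    setIntegral_congr_fun mII2 (fun _ hp => eI_eq f hp)
  rw [h1, split_II2 _ (eI0_integrable hf hB)]
  congr 1
  have h2 := refl_setIntegral TriR (eI0 f)
  rw [← h2]
  have : {p | cR - p ∈ TriR} = Tri := by
    rw [TriR_eq_refl]; ext p; simp
  rw [this]
  unfold ET
  congr 1; ext p
  obtain ⟨x, z⟩ := p
  simp only [eI0, cR, Prod.mk_sub_mk, Fp_refl, h0_refl]
  have q1 : ∀ t, f (2 * π - t) = f (-t) := fun t => by rw [← hper (-t)]; congr 1; ring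
  rw [q1, q1]
  congr 5; ring

lemma normsq_expand (a b c d : ℂ) : (((‖a + b - c - d‖ ^ 2 : ℝ)) : ℂ) =
    (conj a * a + conj b * b + conj c * c + conj d * d)
    - (conj a * c + conj b * c + conj a * d + conj b * d)
    - (conj c * a + conj c * b + conj d * a + conj d * b)
    + (conj a * b + conj b * a + conj c * d + conj d * c) := by
  push_cast
  rw [← Complex.conj_mul']
  simp only [map_sub, map_add]
  ring

def SS (f : ℝ → ℂ) (p : ℝ × ℝ) : ℂ := ((‖f (cA p) + f (cB p) - f (cC p) - f (cD p)‖ ^ 2 : ℝ) : ℂ)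

lemma ET_eq {f : ℝ → ℂ} (hper : Function.Periodic f (2 * π)) : (ET f : ℂ) = JJ (SS f) := by
  unfold ET JJ
  rw [← integral_complex_ofReal]
  have := Phi_integral (fun p => ((‖f p.1 + f (h0 p.1 p.2) - f p.2 - f (p.1 - p.2 + h0 p.1 p.2)‖ ^ 2 : ℝ) : ℂ))
  refine Eq.trans ?_ (this.trans ?_)
  · congr 1; ext p; unfold eI0; push_cast; rfl
  · apply setIntegral_congr_fun isOpen_Qd.measurableSet
    intro p hp
    obtain ⟨u, v⟩ := p
    simp only [SS, Phi, h0_Phi (show |u| + |v| < π / 2 from hp), cA, cB, cC, cD]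
    have e : f (2 * sg u v + 2 * u - (π + 2 * sg u v - 2 * v) + (2 * sg u v - 2 * u)) =
        f (π + 2 * sg u v + 2 * v) := by
      rw [← hper]; congr 1; ring
    rw [e]

lemma ET_neg {f : ℝ → ℂ} (hper : Function.Periodic f (2 * π)) :
    (ET (fun x => f (-x)) : ℂ) = JJ (SS f) := by
  rw [ET_eq (f := fun x => f (-x)) (fun x => by
    show f (-(x + 2 * π)) = f (-x)
    rw [← hper (-(x + 2 * π))]; congr 1; ring), ← JJ_swap]
  unfold JJ
  apply setIntegral_congr_fun isOpen_Qd.measurableSet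
  intro p hp
  obtain ⟨u, v⟩ := p
  have hs := sg_swap (show |u| + |v| < π / 2 from hp)
  simp only [SS, cA, cB, cC, cD, hs]
  congr 3
  have e1 : f (-(2 * (π / 2 - sg u v) + 2 * v)) = f (π + 2 * sg u v - 2 * v) := by
    rw [← hper]; congr 1; ring
  have e2 : f (-(2 * (π / 2 - sg u v) - 2 * v)) = f (π + 2 * sg u v + 2 * v) := by
    rw [← hper]; congr 1; ring
  have e3 : f (-(π + 2 * (π / 2 - sg u v) - 2 * u)) = f (2 * sg u v + 2 * u) := by
    rw [← hper]; congr 1; ring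
  have e4 : f (-(π + 2 * (π / 2 - sg u v) + 2 * u)) = f (2 * sg u v - 2 * u) := by
    rw [← hper]; congr 1; ring
  rw [e1, e2, e3, e4, ← norm_neg]
  congr 1; ring

lemma JJ_HH_u (f : ℝ → ℂ) (a b a' b' : ℝ × ℝ → ℝ)
    (ha : ∀ u v, a' (-u, v) = a (u, v)) (hb : ∀ u v, b' (-u, v) = b (u, v)) :
    JJ (fun p => HH f (a p) (b p)) = JJ (fun p => HH f (a' p) (b' p)) := by
  rw [← JJ_u]; congr 1; ext ⟨u, v⟩
  simp only [← ha, ← hb, neg_neg]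

lemma JJ_HH_v (f : ℝ → ℂ) (a b a' b' : ℝ × ℝ → ℝ)
    (ha : ∀ u v, a' (u, -v) = a (u, v)) (hb : ∀ u v, b' (u, -v) = b (u, v)) :
    JJ (fun p => HH f (a p) (b p)) = JJ (fun p => HH f (a' p) (b' p)) := by
  rw [← JJ_v]; congr 1; ext ⟨u, v⟩
  simp only [← ha, ← hb, neg_neg]

lemma uA (u v : ℝ) : cA (-u, v) = cB (u, v) := by simp only [cA, cB, sg_neg_left]; ring
lemma uB (u v : ℝ) : cB (-u, v) = cA (u, v) := by simp only [cA, cB, sg_neg_left]; ring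
lemma uC (u v : ℝ) : cC (-u, v) = cC (u, v) := by simp only [cC, sg_neg_left]
lemma uD (u v : ℝ) : cD (-u, v) = cD (u, v) := by simp only [cD, sg_neg_left]
lemma vA (u v : ℝ) : cA (u, -v) = cA (u, v) := by simp only [cA, sg_neg_right]
lemma vB (u v : ℝ) : cB (u, -v) = cB (u, v) := by simp only [cB, sg_neg_right]
lemma vC (u v : ℝ) : cC (u, -v) = cD (u, v) := by simp only [cC, cD, sg_neg_right]; ring
lemma vD (u v : ℝ) : cD (u, -v) = cC (u, v) := by simp only [cC, cD, sg_neg_right]; ring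

lemma JJ_SS {f : ℝ → ℂ} (hf : Continuous f) {B : ℝ} (hB : ∀ x, ‖f x‖ ≤ B) :
    JJ (SS f) = 2 * JJ (fun p => HH f (cA p) (cA p)) + 2 * JJ (fun p => HH f (cC p) (cC p))
      - 4 * JJ (fun p => HH f (cA p) (cC p)) - 4 * JJ (fun p => HH f (cC p) (cA p))
      + 2 * JJ (fun p => HH f (cA p) (cB p)) + 2 * JJ (fun p => HH f (cC p) (cD p)) := by
  have I : ∀ {a b : ℝ × ℝ → ℝ}, Measurable a → Measurable b →
    Integrable (fun p : ℝ × ℝ => ((mQ p.1 p.2 : ℝ) : ℂ) * HH f (a p) (b p)) (volume.restrict Qd) :=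
    fun ha hb => HH_integrableQ hf hB ha hb
  have e : JJ (SS f) = ∫ p in Qd,
     ((((mQ p.1 p.2 : ℝ) : ℂ) * HH f (cA p) (cA p) + ((mQ p.1 p.2 : ℝ) : ℂ) * HH f (cB p) (cB p)
      + ((mQ p.1 p.2 : ℝ) : ℂ) * HH f (cC p) (cC p) + ((mQ p.1 p.2 : ℝ) : ℂ) * HH f (cD p) (cD p))
      - (((mQ p.1 p.2 : ℝ) : ℂ) * HH f (cA p) (cC p) + ((mQ p.1 p.2 : ℝ) : ℂ) * HH f (cB p) (cC p)
      + ((mQ p.1 p.2 : ℝ) : ℂ) * HH f (cA p) (cD p) + ((mQ p.1 p.2 : ℝ) : ℂ) * HH f (cB p) (cD p))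
      - (((mQ p.1 p.2 : ℝ) : ℂ) * HH f (cC p) (cA p) + ((mQ p.1 p.2 : ℝ) : ℂ) * HH f (cC p) (cB p)
      + ((mQ p.1 p.2 : ℝ) : ℂ) * HH f (cD p) (cA p) + ((mQ p.1 p.2 : ℝ) : ℂ) * HH f (cD p) (cB p))
      + (((mQ p.1 p.2 : ℝ) : ℂ) * HH f (cA p) (cB p) + ((mQ p.1 p.2 : ℝ) : ℂ) * HH f (cB p) (cA p)
      + ((mQ p.1 p.2 : ℝ) : ℂ) * HH f (cC p) (cD p) + ((mQ p.1 p.2 : ℝ) : ℂ) * HH f (cD p) (cC p))) := by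
    unfold JJ
    congr 1; ext p
    unfold SS HH
    rw [normsq_expand]; ring
  have I4 : ∀ {a b c d a' b' c' d' : ℝ × ℝ → ℝ}, Measurable a → Measurable b → Measurable c → Measurable d →
    Measurable a' → Measurable b' → Measurable c' → Measurable d' →
    Integrable (fun p : ℝ × ℝ => (((mQ p.1 p.2 : ℝ) : ℂ) * HH f (a p) (a' p) + ((mQ p.1 p.2 : ℝ) : ℂ) * HH f (b p) (b' p)
      + ((mQ p.1 p.2 : ℝ) : ℂ) * HH f (c p) (c' p) + ((mQ p.1 p.2 : ℝ) : ℂ) * HH f (d p) (d' p))) (volume.restrict Qd) ∧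
    (∫ p in Qd, (((mQ p.1 p.2 : ℝ) : ℂ) * HH f (a p) (a' p) + ((mQ p.1 p.2 : ℝ) : ℂ) * HH f (b p) (b' p)
      + ((mQ p.1 p.2 : ℝ) : ℂ) * HH f (c p) (c' p) + ((mQ p.1 p.2 : ℝ) : ℂ) * HH f (d p) (d' p))) =
      JJ (fun p => HH f (a p) (a' p)) + JJ (fun p => HH f (b p) (b' p))
      + JJ (fun p => HH f (c p) (c' p)) + JJ (fun p => HH f (d p) (d' p)) := by
    intro a b c d a' b' c' d' h1 h2 h3 h4 h5 h6 h7 h8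
    refine ⟨(((I h1 h5).add (I h2 h6)).add (I h3 h7)).add (I h4 h8), ?_⟩
    rw [integral_add, integral_add, integral_add]
    · rfl
    · exact I h1 h5
    · exact I h2 h6
    · exact (I h1 h5).add (I h2 h6)
    · exact I h3 h7
    · exact ((I h1 h5).add (I h2 h6)).add (I h3 h7)
    · exact I h4 h8
  obtain ⟨i1, e1⟩ := I4 mA mB mC mD mA mB mC mD
  obtain ⟨i2, e2⟩ := I4 mA mB mA mB mC mC mD mD
  obtain ⟨i3, e3⟩ := I4 mC mC mD mD mA mB mA mB
  obtain ⟨i4, e4⟩ := I4 mA mB mC mD mB mA mD mC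
  rw [e, integral_add, integral_sub, integral_sub, e1, e2, e3, e4]
  · rw [JJ_HH_u f cB cB cA cA uA uA, JJ_HH_v f cD cD cC cC vC vC,
      JJ_HH_u f cB cC cA cC uA uC, JJ_HH_v f cA cD cA cC vA vC,
      JJ_HH_u f cB cD cA cD uA uD, JJ_HH_v f cA cD cA cC vA vC,
      JJ_HH_u f cC cB cC cA uC uA, JJ_HH_v f cD cA cC cA vC vA,
      JJ_HH_u f cD cB cD cA uD uA, JJ_HH_v f cD cA cC cA vC vA,
      JJ_HH_u f cB cA cA cB uA uB, JJ_HH_v f cD cC cC cD vC vD]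
    ring
  · exact i1
  · exact i2
  · exact i1.sub i2
  · exact i3
  · exact (i1.sub i2).sub i3
  · exact i4

lemma K2_int {f : ℝ → ℂ} (hf : Continuous f) {B : ℝ} (hB : ∀ x, ‖f x‖ ≤ B)
    {a b : ℝ × ℝ → ℝ} (ha : Measurable a) (hb : Measurable b) :
    IntegrableOn (fun p : ℝ × ℝ => ((K2 p.1 p.2 : ℝ) : ℂ) * HH f (a p) (b p)) (II ×ˢ II) :=
  Integrable.mul_bdd (integrableOn_K2.ofReal (𝕜 := ℂ)) (mHH hf ha hb).aestronglyMeasurable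
    (Eventually.of_forall fun _ => HH_bd hB _ _)

lemma Tri_K2 (G : ℝ × ℝ → ℂ) : ∫ p in Tri, ((K2 p.1 p.2 : ℝ) : ℂ) * G p = 4 * JJ (fun p => G (Phi p)) := by
  unfold JJ
  rw [← Phi_integral, ← integral_const_mul]
  congr 1; ext p
  have : K2 p.1 p.2 = 4 * (1 / (2 * √(Fp p.1 p.2))) := by
    unfold K2; rw [one_div, mul_inv, div_eq_mul_inv]; ring
  rw [this]; push_cast; ring

lemma K2_diag {f : ℝ → ℂ} (hf : Continuous f) {B : ℝ} (hB : ∀ x, ‖f x‖ ≤ B) :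
    ∫ p in II ×ˢ II, ((K2 p.1 p.2 : ℝ) : ℂ) * HH f p.1 p.1 =
      4 * JJ (fun p => HH f (cA p) (cA p)) + 4 * JJ (fun p => HH f (cC p) (cC p)) := by
  rw [split_II2 _ (K2_int hf hB measurable_fst measurable_fst), swap_setIntegral]
  congr 1
  · exact Tri_K2 (fun p => HH f p.1 p.1)
  · refine Eq.trans ?_ (Tri_K2 (fun p => HH f p.2 p.2))
    congr 1; ext p; simp only [K2_symm p.2 p.1]

lemma K2_off {f : ℝ → ℂ} (hf : Continuous f) {B : ℝ} (hB : ∀ x, ‖f x‖ ≤ B) :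
    ∫ p in II ×ˢ II, ((K2 p.1 p.2 : ℝ) : ℂ) * HH f p.1 p.2 =
      4 * JJ (fun p => HH f (cA p) (cC p)) + 4 * JJ (fun p => HH f (cC p) (cA p)) := by
  rw [split_II2 _ (K2_int hf hB measurable_fst measurable_snd), swap_setIntegral]
  congr 1
  · exact Tri_K2 (fun p => HH f p.1 p.2)
  · refine Eq.trans ?_ (Tri_K2 (fun p => HH f p.2 p.1))
    congr 1; ext p; simp only [K2_symm p.2 p.1]

lemma DD_K1 {f : ℝ → ℂ} (hf : Continuous f) {B : ℝ} (hB : ∀ x, ‖f x‖ ≤ B) :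
    IntegrableOn (fun p : ℝ × ℝ => ((K1 p.1 p.2 : ℝ) : ℂ) * HH f p.1 p.2) DD ∧
    ∫ p in DD, ((K1 p.1 p.2 : ℝ) : ℂ) * HH f p.1 p.2 = 4 * JJ (fun p => HH f (cA p) (cB p)) := by
  constructor
  · rw [Psi_integrable_iff (fun p => HH f p.1 p.2)]
    have := ((HH_integrableQ hf hB mA mB).mono_set QdP_sub).const_mul 8
    refine this.congr (Eventually.of_forall fun p => ?_)
    simp only [Psi, cA, cB]; push_cast; ring
  · rw [Psi_integral (fun p => HH f p.1 p.2), JJ_even (mHH hf mA mB) (fun _ => HH_bd hB _ _)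
      (fun u v => by rw [vA, vB]), ← mul_assoc, ← integral_const_mul]
    congr 1; ext p
    simp only [Psi, cA, cB]; push_cast; ring

lemma K1_all {f : ℝ → ℂ} (hper : Function.Periodic f (2 * π)) (hf : Continuous f)
    {B : ℝ} (hB : ∀ x, ‖f x‖ ≤ B) :
    IntegrableOn (fun p : ℝ × ℝ => ((K1 p.1 p.2 : ℝ) : ℂ) * HH f p.1 p.2) (II ×ˢ II) ∧
    ∫ p in II ×ˢ II, ((K1 p.1 p.2 : ℝ) : ℂ) * HH f p.1 p.2 =
      4 * JJ (fun p => HH f (cA p) (cB p)) + 4 * JJ (fun p => HH f (cC p) (cD p)) := by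
  obtain ⟨i1, e1⟩ := DD_K1 hf hB
  obtain ⟨i2, e2⟩ := DD_K1 (f := fun x => f (-x)) (by fun_prop) (fun x => hB (-x))
  have q1 : ∀ t, f (2 * π - t) = f (-t) := fun t => by rw [← hper (-t)]; congr 1; ring
  have q2 : ∀ t, f (-(2 * π - t)) = f t := fun t => by rw [← hper]; congr 1; ring
  have hfun : (fun p : ℝ × ℝ => ((K1 (cR - p).1 (cR - p).2 : ℝ) : ℂ) * HH (fun x => f (-x)) (cR - p).1 (cR - p).2)
      = fun p : ℝ × ℝ => ((K1 p.1 p.2 : ℝ) : ℂ) * HH f p.1 p.2 := by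
    ext p
    simp only [cR, Prod.fst_sub, Prod.snd_sub, K1_refl, HH, q2]
  have i3 := (refl_integrableOn DD _).2 i2
  have e3 := refl_setIntegral DD (fun p : ℝ × ℝ => ((K1 p.1 p.2 : ℝ) : ℂ) * HH (fun x => f (-x)) p.1 p.2)
  rw [hfun] at i3 e3
  rw [e2] at e3
  have hDD : MeasurableSet DD := by
    exact (measurableSet_lt measurable_const measurable_fst).inter
      ((measurableSet_lt measurable_const measurable_snd).inter
      ((measurableSet_lt (measurable_fst.add measurable_snd) measurable_const).inter
      (measurableSet_lt measurable_const measurable_Fm)))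
  have hDDR : MeasurableSet {p | cR - p ∈ DD} := refl_mp.measurable hDD
  have hd : Disjoint DD {p | cR - p ∈ DD} := by
    rw [Set.disjoint_left]
    rintro ⟨x, y⟩ ⟨_, _, h, _⟩ ⟨_, _, h', _⟩
    simp only [cR, Prod.mk_sub_mk] at h h'
    linarith
  have i4 := i1.union i3
  have e4 := setIntegral_union hd hDDR i1 i3
  rw [e1, e3] at e4
  have sub : DD ∪ {p | cR - p ∈ DD} ⊆ (Ioo 0 (2 * π) ×ˢ Ioo 0 (2 * π) : Set (ℝ × ℝ)) := by
    rintro ⟨x, y⟩ (⟨a, b, c, _⟩ | ⟨a, b, c, _⟩)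
    · simp only at a b c
      refine ⟨⟨?_, ?_⟩, ⟨?_, ?_⟩⟩ <;> simp only <;> linarith
    · simp only [cR, Prod.mk_sub_mk] at a b c
      refine ⟨⟨?_, ?_⟩, ⟨?_, ?_⟩⟩ <;> simp only <;> linarith
  have hz : ∀ p ∈ (Ioo 0 (2 * π) ×ˢ Ioo 0 (2 * π) : Set (ℝ × ℝ)) \ (DD ∪ {p | cR - p ∈ DD}),
      ((K1 p.1 p.2 : ℝ) : ℂ) * HH f p.1 p.2 = 0 := by
    rintro ⟨x, y⟩ ⟨⟨hx, hy⟩, hn⟩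
    simp only at hx hy
    have : K1 x y = 0 := by
      unfold K1
      rw [if_neg]
      intro hF
      apply hn
      rcases lt_trichotomy (x + y) (2 * π) with h | h | h
      · exact Or.inl ⟨hx.1, hy.1, h, hF⟩
      · exfalso
        have hye : y = 2 * π - x := by linarith
        rw [hye] at hF
        unfold Fm at hF
        rw [show (2 * π - x) / 2 = π - x / 2 by ring, Real.cos_pi_sub, Real.sin_pi_sub] at hF
        nlinarith [sq_nonneg (Real.sin (x / 2))]
      · refine Or.inr ⟨?_, ?_, ?_, ?_⟩ <;> simp only [cR, Prod.mk_sub_mk]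
        · linarith [hx.2]
        · linarith [hy.2]
        · linarith
        · rw [Fm_refl]; exact hF
    simp [this]
  constructor
  · rw [integrableOn_congr_set_ae II2_ae]
    exact i4.of_forall_sdiff_eq_zero (measurableSet_Ioo.prod measurableSet_Ioo) hz
  · rw [setIntegral_congr_set II2_ae, setIntegral_eq_of_subset_of_forall_sdiff_eq_zero
      (measurableSet_Ioo.prod measurableSet_Ioo) sub hz, e4]
    congr 2
    rw [← JJ_swap]
    unfold JJ
    apply setIntegral_congr_fun isOpen_Qd.measurableSet
    rintro ⟨u, v⟩ hp
    have hs := sg_swap (show |u| + |v| < π / 2 from hp)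
    simp only [HH, cA, cB, cC, cD, hs]
    have e1 : f (-(2 * (π / 2 - sg u v) + 2 * v)) = f (π + 2 * sg u v - 2 * v) := by
      rw [← hper]; congr 1; ring
    have e2 : f (-(2 * (π / 2 - sg u v) - 2 * v)) = f (π + 2 * sg u v + 2 * v) := by
      rw [← hper]; congr 1; ring
    rw [e1, e2]

lemma VV_fubini {f : ℝ → ℂ} (hf : Continuous f) {B : ℝ} (hB : ∀ x, ‖f x‖ ≤ B) :
    ((∫ x in II, VV x * ‖f x‖ ^ 2 : ℝ) : ℂ) =
      ∫ p in II ×ˢ II, ((K2 p.1 p.2 : ℝ) : ℂ) * HH f p.1 p.1 := by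
  have hI := K2_int hf hB measurable_fst measurable_fst
  rw [Measure.volume_eq_prod] at hI ⊢
  rw [setIntegral_prod _ hI, ← integral_complex_ofReal]
  congr 1; ext x
  simp only
  rw [integral_mul_const, integral_complex_ofReal]
  simp only [VV, HH]
  push_cast
  rw [Complex.conj_mul']

theorem part4 {f : ℝ → ℂ} (hper : Function.Periodic f (2 * π)) (hf : Continuous f)
    {B : ℝ} (hB : ∀ x, ‖f x‖ ≤ B) :
    (Elim f : ℂ)
      = ((∫ x in II, VV x * ‖f x‖ ^ 2 : ℝ) : ℂ) +
        ∫ p in II ×ˢ II,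
          (starRingEnd ℂ) (f p.1) * ((K1 p.1 p.2 - 2 * K2 p.1 p.2 : ℝ) : ℂ) * f p.2 := by
  obtain ⟨i1, e1⟩ := K1_all hper hf hB
  have i2 := (K2_int hf hB measurable_fst measurable_snd).const_mul 2
  have e : ∫ p in II ×ˢ II,
          (starRingEnd ℂ) (f p.1) * ((K1 p.1 p.2 - 2 * K2 p.1 p.2 : ℝ) : ℂ) * f p.2
      = ∫ p in II ×ˢ II, (((K1 p.1 p.2 : ℝ) : ℂ) * HH f p.1 p.2
        - 2 * (((K2 p.1 p.2 : ℝ) : ℂ) * HH f p.1 p.2)) := by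
    congr 1; ext p; simp only [HH]; push_cast; ring
  rw [e, integral_sub i1 i2, e1, integral_const_mul, K2_off hf hB, VV_fubini hf hB, K2_diag hf hB,
    Elim_split hper hf hB]
  push_cast
  rw [ET_eq hper, ET_neg hper, JJ_SS hf hB]
  ring

lemma deltaE_nonneg {ε : ℝ} (hε : 0 < ε) (X : ℝ) : 0 ≤ deltaE ε X := by
  unfold deltaE; positivity

lemma deltaE_mul_abs {ε : ℝ} (hε : 0 < ε) (X : ℝ) : deltaE ε X * |X| ≤ 1 := by
  unfold deltaE
  have hp := Real.pi_gt_three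
  have h1 : 0 < ε ^ 2 + X ^ 2 := by positivity
  rw [div_mul_eq_mul_div, div_le_one h1]
  have h2 : ε / π * |X| ≤ ε * |X| := by
    gcongr
    exact div_le_self hε.le (by linarith)
  have h3 : ε * |X| ≤ ε ^ 2 + X ^ 2 := by
    rw [← sq_abs X]
    nlinarith [sq_nonneg (ε - |X|), sq_nonneg (ε + |X|), abs_nonneg X]
  linarith

lemma continuous_deltaE {ε : ℝ} (hε : 0 < ε) : Continuous (deltaE ε) := by
  unfold deltaE
  refine Continuous.div (by fun_prop) (by fun_prop) (fun X => ?_)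
  positivity

lemma deltaE_tendsto {X : ℝ} (hX : X ≠ 0) : Tendsto (fun ε => deltaE ε X) (𝓝[>] 0) (𝓝 0) := by
  have : ContinuousAt (fun ε => deltaE ε X) 0 := by
    unfold deltaE
    refine ContinuousAt.div (by fun_prop) (by fun_prop) ?_
    positivity
  have h := this.tendsto
  simp only [deltaE, zero_div] at h
  exact h.mono_left nhdsWithin_le_nhds

lemma deltaE_mul_tendsto {X r : ℝ} (h : X = 0 → r = 0) :
    Tendsto (fun ε => deltaE ε X * r) (𝓝[>] 0) (𝓝 0) := by
  by_cases hX : X = 0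
  · simp [h hX]
  · simpa using (deltaE_tendsto hX).mul_const r

section oneD
variable {φ φ' : ℝ → ℝ} {L : ℝ}

lemma delta_exact (hd : ∀ y, HasDerivAt φ (φ' y) y) (hc : Continuous φ') {ε : ℝ} (hε : 0 < ε) :
    ∫ y in (0:ℝ)..L, deltaE ε (φ y) * φ' y = (arctan (φ L / ε) - arctan (φ 0 / ε)) / π := by
  have hφ : Continuous φ := continuous_iff_continuousAt.2 fun y => (hd y).continuousAt
  rw [intervalIntegral.integral_eq_sub_of_hasDerivAt (f := fun y => arctan (φ y / ε) / π)]
  · ring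
  · intro y _
    refine ((((hd y).div_const ε).arctan).div_const π).congr_deriv ?_
    unfold deltaE
    have : ε ^ 2 + φ y ^ 2 ≠ 0 := by positivity
    have := Real.pi_pos.ne'
    have : 1 + (φ y / ε) ^ 2 ≠ 0 := by positivity
    field_simp
  · exact (((continuous_deltaE hε).comp hφ).mul hc).intervalIntegrable _ _

lemma delta_bound (hL : 0 ≤ L) (hd : ∀ y, HasDerivAt φ (φ' y) y) (hc : Continuous φ') {ε : ℝ}
    (hε : 0 < ε) {m M : ℝ} (hm : 0 < m) (hmin : ∀ y ∈ Icc 0 L, m ≤ φ' y) {g : ℝ → ℝ}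
    (hg : Continuous g) (hM : ∀ y ∈ Icc 0 L, g y ≤ M) (hM0 : 0 ≤ M) :
    ∫ y in (0:ℝ)..L, deltaE ε (φ y) * g y ≤ M / m := by
  have hφ : Continuous φ := continuous_iff_continuousAt.2 fun y => (hd y).continuousAt
  have hδ := (continuous_deltaE hε).comp hφ
  have h1 : ∫ y in (0:ℝ)..L, deltaE ε (φ y) * g y ≤
      ∫ y in (0:ℝ)..L, (M / m) * (deltaE ε (φ y) * φ' y) := by
    apply intervalIntegral.integral_mono_on hL
    · exact (hδ.mul hg).intervalIntegrable _ _
    · exact ((hδ.mul hc).const_mul _).intervalIntegrable _ _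
    · intro y hy
      have h2 : g y ≤ M / m * φ' y := by
        have := hmin y hy
        calc g y ≤ M := hM y hy
          _ = M / m * m := by field_simp
          _ ≤ _ := by gcongr
      calc _ ≤ deltaE ε (φ y) * (M / m * φ' y) :=
            mul_le_mul_of_nonneg_left h2 (deltaE_nonneg hε _)
        _ = _ := by ring
  refine h1.trans ?_
  rw [intervalIntegral.integral_const_mul, delta_exact hd hc hε]
  have : (arctan (φ L / ε) - arctan (φ 0 / ε)) / π ≤ 1 := by
    rw [div_le_one Real.pi_pos]
    linarith [arctan_lt_pi_div_two (φ L / ε), neg_pi_div_two_lt_arctan (φ 0 / ε)]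
  calc _ ≤ M / m * 1 := by gcongr
    _ = _ := mul_one _

lemma phi_lower (hd : ∀ y, HasDerivAt φ (φ' y) y) {m h : ℝ}
    (hmin : ∀ y ∈ Icc 0 L, m ≤ φ' y) (hh : h ∈ Icc 0 L) (h0 : φ h = 0) {y : ℝ} (hy : y ∈ Icc 0 L) :
    m * |y - h| ≤ |φ y| := by
  have hφ : Continuous φ := continuous_iff_continuousAt.2 fun y => (hd y).continuousAt
  have key := (convex_Icc (0:ℝ) L).mul_sub_le_image_sub_of_le_deriv (f := φ) hφ.continuousOn
    (fun y _ => (hd y).differentiableAt.differentiableWithinAt) (C := m)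
    (fun y hy => by rw [(hd y).deriv]; exact hmin y (interior_subset hy))
  rcases le_total h y with hle | hle
  · have := key h hh y hy hle
    rw [h0, sub_zero] at this
    rw [abs_of_nonneg (sub_nonneg.2 hle)]
    exact this.trans (le_abs_self _)
  · have := key y hy h hh hle
    rw [h0, zero_sub] at this
    rw [abs_of_nonpos (sub_nonpos.2 hle), neg_sub]
    exact this.trans (neg_le_abs _)

lemma delta_limit (hd : ∀ y, HasDerivAt φ (φ' y) y) (hc : Continuous φ')
    {m h C : ℝ} (hm : 0 < m) (hmin : ∀ y ∈ Icc 0 L, m ≤ φ' y) (hh : h ∈ Ioo 0 L) (h0 : φ h = 0)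
    {g : ℝ → ℝ} (hg : Continuous g)
    (hC : ∀ y ∈ Icc 0 L, |g y * φ' h - g h * φ' y| ≤ C * |y - h|) :
    Tendsto (fun ε => ∫ y in (0:ℝ)..L, deltaE ε (φ y) * g y) (𝓝[>] 0) (𝓝 (g h / φ' h)) := by
  have hφ : Continuous φ := continuous_iff_continuousAt.2 fun y => (hd y).continuousAt
  have hhc : h ∈ Icc 0 L := Ioo_subset_Icc_self hh
  have hL : 0 ≤ L := hh.1.le.trans hh.2.le
  have hph : 0 < φ' h := hm.trans_le (hmin h hhc)
  have hmono : ∀ a ∈ Icc 0 L, ∀ b ∈ Icc 0 L, a ≤ b → m * (b - a) ≤ φ b - φ a :=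
    (convex_Icc (0:ℝ) L).mul_sub_le_image_sub_of_le_deriv (f := φ) hφ.continuousOn
    (fun y _ => (hd y).differentiableAt.differentiableWithinAt) (C := m)
    (fun y hy => by rw [(hd y).deriv]; exact hmin y (interior_subset hy))
  have hpos : 0 < φ L := by
    have := hmono h hhc L ⟨hL, le_rfl⟩ hh.2.le
    rw [h0] at this
    nlinarith [hh.2]
  have hneg : φ 0 < 0 := by
    have := hmono 0 ⟨le_rfl, hL⟩ h hhc hh.1.le
    rw [h0] at this
    nlinarith [hh.1]
  have hinv : Tendsto (fun ε : ℝ => ε⁻¹) (𝓝[>] 0) atTop := tendsto_inv_nhdsGT_zero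
  have t1 : Tendsto (fun ε => arctan (φ L / ε)) (𝓝[>] 0) (𝓝 (π / 2)) :=
    (tendsto_arctan_atTop.mono_right nhdsWithin_le_nhds).comp (hinv.const_mul_atTop hpos)
  have t2 : Tendsto (fun ε => arctan (φ 0 / ε)) (𝓝[>] 0) (𝓝 (-(π / 2))) :=
    (tendsto_arctan_atBot.mono_right nhdsWithin_le_nhds).comp (hinv.const_mul_atTop_of_neg hneg)
  have t3 : Tendsto (fun ε => (arctan (φ L / ε) - arctan (φ 0 / ε)) / π) (𝓝[>] 0) (𝓝 1) := by
    have := (t1.sub t2).div_const π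
    rwa [show (π / 2 - -(π / 2)) / π = 1 by rw [sub_neg_eq_add, add_halves, div_self Real.pi_pos.ne']] at this
  have t4 : Tendsto (fun ε => ∫ y in (0:ℝ)..L, deltaE ε (φ y) * (g y * φ' h - g h * φ' y))
      (𝓝[>] 0) (𝓝 (∫ y in (0:ℝ)..L, (0:ℝ))) := by
    apply intervalIntegral.tendsto_integral_filter_of_dominated_convergence (fun _ => |C| / m)
    · filter_upwards [self_mem_nhdsWithin] with ε hε
      exact (((continuous_deltaE hε).comp hφ).mul ((hg.mul_const _).sub (hc.const_mul _))).aestronglyMeasurable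
    · filter_upwards [self_mem_nhdsWithin] with ε hε
      refine Eventually.of_forall fun y hy => ?_
      rw [uIoc_of_le hL] at hy
      have hy' : y ∈ Icc 0 L := Ioc_subset_Icc_self hy
      rw [norm_mul, Real.norm_of_nonneg (deltaE_nonneg hε _), Real.norm_eq_abs]
      have a1 := hC y hy'
      have a2 := phi_lower hd hmin hhc h0 hy'
      have a3 := deltaE_mul_abs hε (φ y)
      have a4 := deltaE_nonneg hε (φ y)
      rw [le_div_iff₀ hm]
      calc deltaE ε (φ y) * |g y * φ' h - g h * φ' y| * m
          ≤ deltaE ε (φ y) * (|C| * |y - h|) * m := by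
            gcongr
            exact a1.trans (by gcongr; exact le_abs_self C)
        _ = |C| * (deltaE ε (φ y) * (m * |y - h|)) := by ring
        _ ≤ |C| * (deltaE ε (φ y) * |φ y|) := by gcongr
        _ ≤ |C| * 1 := by gcongr
        _ = |C| := mul_one _
    · exact intervalIntegrable_const
    · refine Eventually.of_forall fun y hy => ?_
      rw [uIoc_of_le hL] at hy
      have hy' : y ∈ Icc 0 L := Ioc_subset_Icc_self hy
      apply deltaE_mul_tendsto
      intro hz
      have a2 := phi_lower hd hmin hhc h0 hy'
      rw [hz, abs_zero] at a2
      have a5 : |y - h| ≤ 0 := by nlinarith [abs_nonneg (y - h)]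
      have a6 : y = h := by
        have := abs_nonpos_iff.1 a5; linarith
      rw [a6]; ring
  rw [intervalIntegral.integral_zero] at t4
  have t5 := ((t3.const_mul (g h)).add t4).div_const (φ' h)
  rw [mul_one, add_zero] at t5
  refine t5.congr' ?_
  filter_upwards [self_mem_nhdsWithin] with ε hε
  have hδ := (continuous_deltaE hε).comp hφ
  rw [← delta_exact hd hc hε, ← intervalIntegral.integral_const_mul, ← intervalIntegral.integral_add,
    div_eq_iff hph.ne', ← intervalIntegral.integral_mul_const]
  · congr 1; ext y; ring
  · exact ((hδ.mul hc).const_mul _).intervalIntegrable _ _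
  · exact (hδ.mul ((hg.mul_const _).sub (hc.const_mul _))).intervalIntegrable _ _

end oneD

def G3 (f : ℝ → ℂ) (x y z : ℝ) : ℝ := ‖f x + f y - f z - f (x + y - z)‖ ^ 2

def phA (x z y : ℝ) : ℝ := 2 * Real.cos ((z - x) / 4) * Real.sin (y / 2 - (z - x) / 4)
  - 2 * Real.sin ((z - x) / 4) * Real.cos ((x + z) / 4)
def phA' (x z y : ℝ) : ℝ := Real.cos ((z - x) / 4) * Real.cos (y / 2 - (z - x) / 4)

lemma phA_deriv (x z y : ℝ) : HasDerivAt (phA x z) (phA' x z y) y := by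
  have h1 : HasDerivAt (fun y : ℝ => y / 2 - (z - x) / 4) (1 / 2) y :=
    ((hasDerivAt_id y).div_const 2).sub_const _
  refine ((h1.sin.const_mul (2 * Real.cos ((z - x) / 4))).sub_const _).congr_deriv ?_
  unfold phA'; ring

lemma phA'_cont (x z : ℝ) : Continuous (phA' x z) := by unfold phA'; fun_prop

lemma Omg_A {x y z : ℝ} (h : (x, z) ∈ Tri) (hy : y ∈ Icc 0 (z - x)) : Omg x y z = phA x z y := by
  obtain ⟨hx, hxz, hz⟩ := h
  obtain ⟨hy0, hy1⟩ := hy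
  simp only at hx hxz hz
  unfold Omg omg phA
  have p := Real.pi_pos
  rw [abs_of_nonneg (sin_nonneg_of_nonneg_of_le_pi (by linarith) (by linarith) : 0 ≤ Real.sin (x / 2)),
    abs_of_nonneg (sin_nonneg_of_nonneg_of_le_pi (by linarith) (by linarith) : 0 ≤ Real.sin (y / 2)),
    abs_of_nonneg (sin_nonneg_of_nonneg_of_le_pi (by linarith) (by linarith) : 0 ≤ Real.sin (z / 2)),
    abs_of_nonpos (sin_nonpos_of_nonpos_of_neg_pi_le (by linarith) (by linarith) :
      Real.sin ((x + y - z) / 2) ≤ 0)]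
  have e1 : x / 2 = (x + z) / 4 - (z - x) / 4 := by ring
  have e2 : z / 2 = (x + z) / 4 + (z - x) / 4 := by ring
  have e3 : y / 2 = (y / 2 - (z - x) / 4) + (z - x) / 4 := by ring
  have e4 : (x + y - z) / 2 = (y / 2 - (z - x) / 4) - (z - x) / 4 := by ring
  rw [e4, e1, e2]
  nth_rewrite 1 [e3]
  simp only [Real.sin_add, Real.sin_sub]
  ring

lemma cosq {x z : ℝ} (h : (x, z) ∈ Tri) :
    0 < Real.cos ((z - x) / 4) ∧ (2 * π - (z - x)) ≤ 2 * π * Real.cos ((z - x) / 4) := by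
  obtain ⟨hx, hxz, hz⟩ := h
  simp only at hx hxz hz
  have p := Real.pi_pos
  have h1 := Real.mul_le_sin (x := (2 * π - (z - x)) / 4) (by linarith) (by linarith)
  rw [show (2 * π - (z - x)) / 4 = π / 2 - (z - x) / 4 by ring, Real.sin_pi_div_two_sub] at h1
  refine ⟨Real.cos_pos_of_mem_Ioo ⟨by linarith, by linarith⟩, ?_⟩
  have h2 : 2 * π * (2 / π * (π / 2 - (z - x) / 4)) = 2 * π - (z - x) := by
    field_simp; ring
  rw [← h2]
  gcongr

lemma phA'_min {x z : ℝ} (h : (x, z) ∈ Tri) {y : ℝ} (hy : y ∈ Icc 0 (z - x)) :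
    Real.cos ((z - x) / 4) ^ 2 ≤ phA' x z y := by
  have c := (cosq h).1
  obtain ⟨hx, hxz, hz⟩ := h
  obtain ⟨hy0, hy1⟩ := hy
  simp only at hx hxz hz
  have p := Real.pi_pos
  unfold phA'
  rw [sq]
  gcongr
  rw [← Real.cos_abs (y / 2 - (z - x) / 4)]
  apply Real.cos_le_cos_of_nonneg_of_le_pi (abs_nonneg _) (by linarith)
  rw [abs_le]; constructor <;> linarith

lemma phA_zero {x z : ℝ} (h : (x, z) ∈ Tri) : phA x z (h0 x z) = 0 := by
  unfold phA; linarith [(h0_tri h).2.2]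

lemma G3_cont {f : ℝ → ℂ} (hf : Continuous f) (x z : ℝ) : Continuous (fun y => G3 f x y z) := by
  unfold G3; fun_prop

lemma G3_nonneg (f : ℝ → ℂ) (x y z : ℝ) : 0 ≤ G3 f x y z := by unfold G3; positivity

lemma four_bd {f : ℝ → ℂ} {B : ℝ} (hB : ∀ x, ‖f x‖ ≤ B) (x y z w : ℝ) :
    ‖f x + f y - f z - f w‖ ≤ 4 * B := by
  refine (norm_sub_le _ _).trans ?_
  have h3 := norm_sub_le (f x + f y) (f z)
  have h4 := norm_add_le (f x) (f y)
  linarith [hB x, hB y, hB z, hB w]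

lemma lipf {f : ℝ → ℂ} {K : NNReal} (hlip : LipschitzWith K f) (a b : ℝ) :
    ‖f a - f b‖ ≤ K * |a - b| := by
  have := hlip.dist_le_mul a b
  rwa [dist_eq_norm, Real.dist_eq] at this

lemma G3_lip {f : ℝ → ℂ} {K : NNReal} (hlip : LipschitzWith K f) {B : ℝ} (hB : ∀ x, ‖f x‖ ≤ B)
    (x y y' z : ℝ) : |G3 f x y z - G3 f x y' z| ≤ 16 * K * B * |y - y'| := by
  unfold G3
  set a := f x + f y - f z - f (x + y - z)
  set b := f x + f y' - f z - f (x + y' - z)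
  have h1 : ‖a‖ ≤ 4 * B := four_bd hB _ _ _ _
  have h2 : ‖b‖ ≤ 4 * B := four_bd hB _ _ _ _
  have h3 : ‖a - b‖ ≤ 2 * K * |y - y'| := by
    have e : a - b = (f y - f y') - (f (x + y - z) - f (x + y' - z)) := by
      simp only [a, b]; ring
    rw [e]
    refine (norm_sub_le _ _).trans ?_
    have i1 := lipf hlip y y'
    have i2 := lipf hlip (x + y - z) (x + y' - z)
    rw [show x + y - z - (x + y' - z) = y - y' by ring] at i2
    linarith
  have h4 := abs_norm_sub_norm_le a b
  rw [sq_sub_sq, abs_mul, abs_of_nonneg (by positivity : 0 ≤ ‖a‖ + ‖b‖)]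
  calc (‖a‖ + ‖b‖) * |‖a‖ - ‖b‖| ≤ (4 * B + 4 * B) * (2 * K * |y - y'|) := by
        gcongr
        · linarith [norm_nonneg a]
        · exact h4.trans h3
    _ = _ := by ring

lemma G3_sup {f : ℝ → ℂ} {K : NNReal} (hper : Function.Periodic f (2 * π))
    (hlip : LipschitzWith K f) {x z : ℝ} (h : (x, z) ∈ Tri) (y : ℝ) :
    G3 f x y z ≤ 4 * K ^ 2 * (2 * π - (z - x)) ^ 2 := by
  obtain ⟨hx, hxz, hz⟩ := h
  simp only at hx hxz hz
  unfold G3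
  have e : f x + f y - f z - f (x + y - z) = (f (x + 2 * π) - f z) - (f (x + y - z + 2 * π) - f y) := by
    rw [hper, hper]; ring
  have i1 := lipf hlip (x + 2 * π) z
  have i2 := lipf hlip (x + y - z + 2 * π) y
  rw [abs_of_nonneg (by linarith)] at i1 i2
  have i3 : ‖f x + f y - f z - f (x + y - z)‖ ≤ 2 * K * (2 * π - (z - x)) := by
    rw [e]
    refine (norm_sub_le _ _).trans ?_
    linarith
  calc _ ≤ (2 * K * (2 * π - (z - x))) ^ 2 := by gcongr
    _ = _ := by ring

def inn (f : ℝ → ℂ) (ε : ℝ) (p : ℝ × ℝ) : ℝ :=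
  ∫ y in (0:ℝ)..(p.2 - p.1), deltaE ε (Omg p.1 y p.2) * G3 f p.1 y p.2

lemma inn_eq (f : ℝ → ℂ) (ε : ℝ) {p : ℝ × ℝ} (h : p ∈ Tri) :
    inn f ε p = ∫ y in (0:ℝ)..(p.2 - p.1), deltaE ε (phA p.1 p.2 y) * G3 f p.1 y p.2 := by
  unfold inn
  apply intervalIntegral.integral_congr
  intro y hy
  rw [uIcc_of_le (by linarith [h.2.1])] at hy
  simp only
  rw [Omg_A h hy]

lemma inn_bound {f : ℝ → ℂ} {K : NNReal} (hper : Function.Periodic f (2 * π))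
    (hlip : LipschitzWith K f) {ε : ℝ} (hε : 0 < ε) {p : ℝ × ℝ} (h : p ∈ Tri) :
    ‖inn f ε p‖ ≤ 16 * π ^ 2 * K ^ 2 := by
  have hle : 0 ≤ p.2 - p.1 := by linarith [h.2.1]
  obtain ⟨c1, c2⟩ := cosq h
  have nn : 0 ≤ inn f ε p := by
    unfold inn
    exact intervalIntegral.integral_nonneg hle
      (fun y _ => mul_nonneg (deltaE_nonneg hε _) (G3_nonneg _ _ _ _))
  rw [Real.norm_of_nonneg nn, inn_eq f ε h]
  refine (delta_bound hle (phA_deriv p.1 p.2) (phA'_cont p.1 p.2) hε (by positivity)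
    (fun y hy => phA'_min h hy) (G3_cont hlip.continuous p.1 p.2) (fun y _ => G3_sup hper hlip h y)
    (by positivity)).trans ?_
  rw [div_le_iff₀ (by positivity)]
  have d0 : 0 ≤ 2 * π - (p.2 - p.1) := by linarith [h.1, h.2.2]
  calc 4 * (K:ℝ) ^ 2 * (2 * π - (p.2 - p.1)) ^ 2
      ≤ 4 * (K:ℝ) ^ 2 * (2 * π * Real.cos ((p.2 - p.1) / 4)) ^ 2 := by gcongr
    _ = _ := by ring

lemma abs_cos_sub (a b : ℝ) : |Real.cos a - Real.cos b| ≤ |a - b| := by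
  have h := (Convex.norm_image_sub_le_of_norm_deriv_le (f := Real.cos) (C := 1) (s := Set.univ)
    (x := b) (y := a) (fun x _ => Real.differentiableAt_cos)
    (fun x _ => by rw [Real.deriv_cos, norm_neg]; exact Real.abs_sin_le_one x) convex_univ
    (mem_univ _) (mem_univ _))
  simpa using h

lemma inn_limit {f : ℝ → ℂ} {K : NNReal} (hlip : LipschitzWith K f) {B : ℝ}
    (hB : ∀ x, ‖f x‖ ≤ B) {p : ℝ × ℝ} (h : p ∈ Tri) :
    Tendsto (fun ε => inn f ε p) (𝓝[>] 0) (𝓝 (4 * eI0 f p)) := by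
  obtain ⟨x, z⟩ := p
  obtain ⟨c1, c2⟩ := cosq h
  obtain ⟨t1, t2, -⟩ := h0_tri h
  have hB0 : 0 ≤ B := (norm_nonneg _).trans (hB 0)
  have key := delta_limit (L := z - x) (phA_deriv x z) (phA'_cont x z)
    (m := Real.cos ((z - x) / 4) ^ 2) (h := h0 x z) (C := 16 * K * B + 16 * B ^ 2) (by positivity)
    (fun y hy => phA'_min h hy) ⟨t1, t2⟩ (phA_zero h) (G3_cont hlip.continuous x z) (by
      intro y hy
      have a1 := G3_lip hlip hB x y (h0 x z) z
      have a2 : |phA' x z (h0 x z)| ≤ 1 := by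
        unfold phA'; rw [abs_mul]
        exact mul_le_one₀ (Real.abs_cos_le_one _) (abs_nonneg _) (Real.abs_cos_le_one _)
      have a3 : |phA' x z (h0 x z) - phA' x z y| ≤ |y - h0 x z| := by
        unfold phA'; rw [← mul_sub, abs_mul]
        have b1 := abs_cos_sub (h0 x z / 2 - (z - x) / 4) (y / 2 - (z - x) / 4)
        have b2 : |h0 x z / 2 - (z - x) / 4 - (y / 2 - (z - x) / 4)| ≤ |y - h0 x z| := by
          rw [show h0 x z / 2 - (z - x) / 4 - (y / 2 - (z - x) / 4) = -((y - h0 x z) / 2) by ring,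
            abs_neg, abs_div, abs_two]
          linarith [abs_nonneg (y - h0 x z)]
        calc _ ≤ 1 * |y - h0 x z| :=
              mul_le_mul (Real.abs_cos_le_one _) (b1.trans b2) (abs_nonneg _) zero_le_one
          _ = _ := one_mul _
      have a4 : |G3 f x (h0 x z) z| ≤ 16 * B ^ 2 := by
        rw [abs_of_nonneg (G3_nonneg _ _ _ _)]
        calc G3 f x (h0 x z) z ≤ (4 * B) ^ 2 := by
              unfold G3; gcongr; exact four_bd hB _ _ _ _
          _ = _ := by ring
      have e : G3 f x y z * phA' x z (h0 x z) - G3 f x (h0 x z) z * phA' x z y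
        = (G3 f x y z - G3 f x (h0 x z) z) * phA' x z (h0 x z)
          + G3 f x (h0 x z) z * (phA' x z (h0 x z) - phA' x z y) := by ring
      rw [e]
      refine (abs_add_le _ _).trans ?_
      rw [abs_mul, abs_mul, add_mul]
      apply add_le_add
      · calc _ ≤ 16 * K * B * |y - h0 x z| * 1 :=
              mul_le_mul a1 a2 (abs_nonneg _) (by positivity)
          _ = _ := mul_one _
      · exact mul_le_mul a4 a3 (abs_nonneg _) (by positivity))
  have e1 : phA' x z (h0 x z) = √(Fp x z) / 2 := cos_h0 h
  have e2 : 4 * eI0 f (x, z) = G3 f x (h0 x z) z / phA' x z (h0 x z) := by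
    have hs : √(Fp x z) ≠ 0 := (Real.sqrt_pos.2 (Fp_pos h)).ne'
    rw [e1]
    simp only [eI0, G3]
    rw [show x + h0 x z - z = x - z + h0 x z by ring]
    field_simp; ring
  rw [e2]
  refine key.congr (fun ε => ?_)
  exact (inn_eq f ε h).symm

def FF (f : ℝ → ℂ) (ε : ℝ) (p : ℝ × ℝ × ℝ) : ℝ :=
  deltaE ε (Omg p.1 p.2.1 p.2.2) * G3 f p.1 p.2.1 p.2.2

def C3 : Set (ℝ × ℝ × ℝ) := Ioo 0 (2 * π) ×ˢ Ioo 0 (2 * π) ×ˢ Ioo 0 (2 * π)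
def RA : Set (ℝ × ℝ × ℝ) := C3 ∩ {p | p.1 + p.2.1 - p.2.2 < 0}
def RB : Set (ℝ × ℝ × ℝ) := C3 ∩ {p | 2 * π < p.1 + p.2.1 - p.2.2}
def RM : Set (ℝ × ℝ × ℝ) := C3 ∩ {p | 0 ≤ p.1 + p.2.1 - p.2.2 ∧ p.1 + p.2.1 - p.2.2 ≤ 2 * π}

lemma measurable_lin : Measurable (fun p : ℝ × ℝ × ℝ => p.1 + p.2.1 - p.2.2) := by fun_prop
lemma mC3 : MeasurableSet C3 := measurableSet_Ioo.prod (measurableSet_Ioo.prod measurableSet_Ioo)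
lemma mRA : MeasurableSet RA := mC3.inter (measurableSet_lt measurable_lin measurable_const)
lemma mRB : MeasurableSet RB := mC3.inter (measurableSet_lt measurable_const measurable_lin)
lemma mRM : MeasurableSet RM := mC3.inter ((measurableSet_le measurable_const measurable_lin).inter
  (measurableSet_le measurable_lin measurable_const))

lemma C3_eq : C3 = RM ∪ (RA ∪ RB) := by
  ext p
  simp only [RM, RA, RB, mem_union, mem_inter_iff, mem_ofPred_eq]
  constructor
  · intro h
    rcases lt_or_ge (p.1 + p.2.1 - p.2.2) 0 with h1 | h1
    · exact Or.inr (Or.inl ⟨h, h1⟩)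
    · rcases lt_or_ge (2 * π) (p.1 + p.2.1 - p.2.2) with h2 | h2
      · exact Or.inr (Or.inr ⟨h, h2⟩)
      · exact Or.inl ⟨h, h1, h2⟩
  · rintro (h | h | h) <;> exact h.1

lemma FF_cont {f : ℝ → ℂ} (hf : Continuous f) {ε : ℝ} (hε : 0 < ε) : Continuous (FF f ε) := by
  unfold FF
  refine ((continuous_deltaE hε).comp ?_).mul ?_
  · unfold Omg omg; fun_prop
  · unfold G3; fun_prop

lemma FF_int {f : ℝ → ℂ} (hf : Continuous f) {ε : ℝ} (hε : 0 < ε) : IntegrableOn (FF f ε) C3 := by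
  have hK : IsCompact (Icc 0 (2 * π) ×ˢ Icc 0 (2 * π) ×ˢ Icc 0 (2 * π) : Set (ℝ × ℝ × ℝ)) :=
    isCompact_Icc.prod (isCompact_Icc.prod isCompact_Icc)
  exact ((FF_cont hf hε).continuousOn.integrableOn_compact hK).mono_set
    (prod_mono Ioo_subset_Icc_self (prod_mono Ioo_subset_Icc_self Ioo_subset_Icc_self))

lemma FF_split {f : ℝ → ℂ} (hf : Continuous f) {ε : ℝ} (hε : 0 < ε) :
    ∫ p in II ×ˢ II ×ˢ II, FF f ε p =
      (∫ p in RM, FF f ε p) + ((∫ p in RA, FF f ε p) + ∫ p in RB, FF f ε p) := by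
  have hae : (II ×ˢ II ×ˢ II : Set (ℝ × ℝ × ℝ)) =ᵐ[volume] C3 := by
    rw [Measure.volume_eq_prod]
    exact Measure.set_prod_ae_eq II_ae II2_ae
  have hi := FF_int hf hε
  rw [setIntegral_congr_set hae, C3_eq, setIntegral_union, setIntegral_union]
  · rw [Set.disjoint_left]
    rintro p ⟨_, h1⟩ ⟨_, h2⟩
    simp only [mem_ofPred_eq] at h1 h2
    linarith [Real.pi_pos]
  · exact mRB
  · exact hi.mono_set inter_subset_left
  · exact hi.mono_set inter_subset_left
  · rw [Set.disjoint_left]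
    rintro p ⟨_, h1⟩ (⟨_, h2⟩ | ⟨_, h2⟩)
    · simp only [mem_ofPred_eq] at h1 h2
      linarith
    · simp only [mem_ofPred_eq] at h1 h2
      linarith
  · exact mRA.union mRB
  · exact hi.mono_set inter_subset_left
  · exact hi.mono_set (union_subset inter_subset_left inter_subset_left)

/-! reflection -/
instance haarR3 : Measure.IsAddHaarMeasure (volume : Measure (ℝ × ℝ × ℝ)) :=
  Measure.prod.instIsAddHaarMeasure _ _

def cR3 : ℝ × ℝ × ℝ := (2 * π, 2 * π, 2 * π)

lemma refl_mp3 : MeasurePreserving (fun p : ℝ × ℝ × ℝ => cR3 - p) volume volume :=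
  (volume : Measure (ℝ × ℝ × ℝ)).measurePreserving_sub_left cR3

lemma omg_refl (x : ℝ) : omg (2 * π - x) = omg x := by
  unfold omg
  rw [show (2 * π - x) / 2 = π - x / 2 by ring, Real.sin_pi_sub]

lemma RB_refl {f : ℝ → ℂ} (hper : Function.Periodic f (2 * π)) (ε : ℝ) :
    ∫ p in RB, FF f ε p = ∫ p in RA, FF (fun x => f (-x)) ε p := by
  have emb : MeasurableEmbedding (fun p : ℝ × ℝ × ℝ => cR3 - p) :=
    (MeasurableEquiv.subLeft cR3).measurableEmbedding
  have h := refl_mp3.setIntegral_preimage_emb emb (FF f ε) RB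
  rw [← h]
  have hs : (fun p : ℝ × ℝ × ℝ => cR3 - p) ⁻¹' RB = RA := by
    ext ⟨x, y, z⟩
    simp only [RA, RB, C3, cR3, mem_preimage, Prod.mk_sub_mk, mem_inter_iff, mem_prod, mem_Ioo,
      mem_ofPred_eq]
    constructor
    · rintro ⟨⟨⟨a, b⟩, ⟨c, d⟩, ⟨e, g⟩⟩, i⟩
      refine ⟨⟨⟨?_, ?_⟩, ⟨?_, ?_⟩, ⟨?_, ?_⟩⟩, ?_⟩ <;> linarith
    · rintro ⟨⟨⟨a, b⟩, ⟨c, d⟩, ⟨e, g⟩⟩, i⟩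
      refine ⟨⟨⟨?_, ?_⟩, ⟨?_, ?_⟩, ⟨?_, ?_⟩⟩, ?_⟩ <;> linarith
  rw [hs]
  congr 1; ext ⟨x, y, z⟩
  have q1 : ∀ t, f (2 * π - t) = f (-t) := fun t => by rw [← hper (-t)]; congr 1; ring
  simp only [FF, Omg, G3, cR3, Prod.mk_sub_mk]
  rw [show 2 * π - x + (2 * π - y) - (2 * π - z) = 2 * π - (x + y - z) by ring]
  simp only [omg_refl, q1]

/-! region A via Fubini -/
def eA : (ℝ × ℝ) × ℝ ≃ᵐ ℝ × ℝ × ℝ :=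
  MeasurableEquiv.prodAssoc.trans ((MeasurableEquiv.refl ℝ).prodCongr MeasurableEquiv.prodComm)

lemma eA_apply (x z y : ℝ) : eA ((x, z), y) = (x, y, z) := rfl

lemma eA_mp : MeasurePreserving eA volume volume := by
  have h1 : MeasurePreserving (MeasurableEquiv.prodAssoc : (ℝ × ℝ) × ℝ ≃ᵐ ℝ × ℝ × ℝ) volume volume :=
    volume_preserving_prodAssoc
  have h2 : MeasurePreserving (Prod.map id Prod.swap : ℝ × ℝ × ℝ → ℝ × ℝ × ℝ) volume volume :=
    (MeasurePreserving.id (volume : Measure ℝ)).prod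
      (Measure.measurePreserving_swap (μ := (volume : Measure ℝ)) (ν := (volume : Measure ℝ)))
  exact h2.comp h1

def SA : Set ((ℝ × ℝ) × ℝ) := eA ⁻¹' RA

lemma mem_SA (p : ℝ × ℝ) (y : ℝ) : (p, y) ∈ SA ↔ p ∈ Tri ∧ y ∈ Ioo 0 (p.2 - p.1) := by
  obtain ⟨x, z⟩ := p
  simp only [SA, RA, C3, Tri, mem_preimage, eA_apply, mem_inter_iff, mem_prod, mem_Ioo, mem_ofPred_eq]
  constructor
  · rintro ⟨⟨⟨a, b⟩, ⟨c, d⟩, ⟨e, g⟩⟩, i⟩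
    refine ⟨⟨?_, ?_, ?_⟩, ?_, ?_⟩ <;> linarith
  · rintro ⟨⟨a, b, c⟩, d, e⟩
    refine ⟨⟨⟨?_, ?_⟩, ⟨?_, ?_⟩, ⟨?_, ?_⟩⟩, ?_⟩ <;> linarith

lemma SA_inner (f : ℝ → ℂ) (ε : ℝ) (p : ℝ × ℝ) :
    ∫ y, SA.indicator (fun P => FF f ε (eA P)) (p, y) = Tri.indicator (inn f ε) p := by
  by_cases hp : p ∈ Tri
  · rw [indicator_of_mem hp]
    have e : (fun y => SA.indicator (fun P => FF f ε (eA P)) (p, y)) =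
        (Ioo 0 (p.2 - p.1)).indicator (fun y => deltaE ε (Omg p.1 y p.2) * G3 f p.1 y p.2) := by
      ext y
      by_cases hy : y ∈ Ioo 0 (p.2 - p.1)
      · rw [indicator_of_mem hy, indicator_of_mem ((mem_SA p y).2 ⟨hp, hy⟩)]
        rfl
      · rw [indicator_of_notMem hy, indicator_of_notMem (fun h => hy ((mem_SA p y).1 h).2)]
    rw [e, integral_indicator measurableSet_Ioo, ← integral_Ioc_eq_integral_Ioo]
    unfold inn
    rw [intervalIntegral.integral_of_le (by linarith [hp.2.1])]
  · rw [indicator_of_notMem hp]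
    have e : (fun y => SA.indicator (fun P => FF f ε (eA P)) (p, y)) = fun _ => 0 := by
      ext y
      rw [indicator_of_notMem (fun h => hp ((mem_SA p y).1 h).1)]
    rw [e, integral_zero]

lemma mTri : MeasurableSet Tri := isOpen_Tri.measurableSet

lemma RA_fubini {f : ℝ → ℂ} (hf : Continuous f) {ε : ℝ} (hε : 0 < ε) :
    AEStronglyMeasurable (inn f ε) (volume.restrict Tri) ∧
    ∫ p in RA, FF f ε p = ∫ p in Tri, inn f ε p := by
  have hi : IntegrableOn (FF f ε) RA := (FF_int hf hε).mono_set inter_subset_left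
  have mS : MeasurableSet SA := eA.measurable mRA
  have hi2 : IntegrableOn (fun P => FF f ε (eA P)) SA :=
    (eA_mp.integrableOn_comp_preimage eA.measurableEmbedding).2 hi
  have e1 : ∫ p in RA, FF f ε p = ∫ P in SA, FF f ε (eA P) :=
    (eA_mp.setIntegral_preimage_emb eA.measurableEmbedding (FF f ε) RA).symm
  have hi3 : Integrable (SA.indicator (fun P => FF f ε (eA P)))
      ((volume : Measure (ℝ × ℝ)).prod (volume : Measure ℝ)) :=
    (integrable_indicator_iff mS).2 hi2
  have hi4 := hi3.integral_prod_left
  simp only [SA_inner] at hi4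
  refine ⟨((integrable_indicator_iff mTri).1 hi4).aestronglyMeasurable, ?_⟩
  rw [e1, ← integral_indicator mS, Measure.volume_eq_prod (ℝ × ℝ) ℝ, integral_prod _ hi3]
  simp only [SA_inner]
  rw [integral_indicator mTri]

lemma RA_limit {f : ℝ → ℂ} {K : NNReal} (hper : Function.Periodic f (2 * π))
    (hlip : LipschitzWith K f) {B : ℝ} (hB : ∀ x, ‖f x‖ ≤ B) :
    Tendsto (fun ε => ∫ p in RA, FF f ε p) (𝓝[>] 0) (𝓝 (4 * ET f)) := by
  have hf := hlip.continuous
  have fin : volume Tri < ⊤ := by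
    have h1 : volume (Icc 0 (2 * π) ×ˢ Icc 0 (2 * π) : Set (ℝ × ℝ)) < ⊤ :=
      (isCompact_Icc.prod isCompact_Icc).measure_lt_top
    refine (measure_mono ?_).trans_lt h1
    rintro ⟨x, z⟩ ⟨a, b, c⟩
    simp only at a b c
    exact ⟨⟨by simp only; linarith, by simp only; linarith⟩, ⟨by simp only; linarith, by simp only; linarith⟩⟩
  have t : Tendsto (fun ε => ∫ p in Tri, inn f ε p) (𝓝[>] 0) (𝓝 (∫ p in Tri, 4 * eI0 f p)) := by
    apply tendsto_integral_filter_of_dominated_convergence (fun _ => 16 * π ^ 2 * (K:ℝ) ^ 2)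
    · filter_upwards [self_mem_nhdsWithin] with ε hε
      exact (RA_fubini hf hε).1
    · filter_upwards [self_mem_nhdsWithin] with ε hε
      filter_upwards [ae_restrict_mem mTri] with p hp
      exact inn_bound hper hlip hε hp
    · exact integrableOn_const fin.ne
    · filter_upwards [ae_restrict_mem mTri] with p hp
      exact inn_limit hlip hB hp
  rw [integral_const_mul] at t
  refine t.congr' ?_
  filter_upwards [self_mem_nhdsWithin] with ε hε
  exact (RA_fubini hf hε).2.symm

/-! the middle region -/
lemma Omg_M {x y z : ℝ} (h : (x, y, z) ∈ RM) :
    Omg x y z = 4 * Real.sin ((x + y) / 4) * Real.sin ((x - z) / 4) * Real.sin ((y - z) / 4) := by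
  obtain ⟨⟨⟨a, b⟩, ⟨c, d⟩, ⟨e, g⟩⟩, i, j⟩ := h
  simp only at a b c d e g i j
  unfold Omg omg
  rw [abs_of_nonneg (sin_nonneg_of_nonneg_of_le_pi (by linarith) (by linarith) : 0 ≤ Real.sin (x / 2)),
    abs_of_nonneg (sin_nonneg_of_nonneg_of_le_pi (by linarith) (by linarith) : 0 ≤ Real.sin (y / 2)),
    abs_of_nonneg (sin_nonneg_of_nonneg_of_le_pi (by linarith) (by linarith) : 0 ≤ Real.sin (z / 2)),
    abs_of_nonneg (sin_nonneg_of_nonneg_of_le_pi (by linarith) (by linarith) :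
      0 ≤ Real.sin ((x + y - z) / 2))]
  have h1 : Real.sin (x / 2) + Real.sin (y / 2) =
      2 * Real.sin ((x + y) / 4) * Real.cos ((x - y) / 4) := by
    rw [show x / 2 = (x + y) / 4 + (x - y) / 4 by ring, show y / 2 = (x + y) / 4 - (x - y) / 4 by ring,
      Real.sin_add, Real.sin_sub]; ring
  have h2 : Real.sin (z / 2) + Real.sin ((x + y - z) / 2) =
      2 * Real.sin ((x + y) / 4) * Real.cos ((x + y - 2 * z) / 4) := by
    rw [show z / 2 = (x + y) / 4 - (x + y - 2 * z) / 4 by ring,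
      show (x + y - z) / 2 = (x + y) / 4 + (x + y - 2 * z) / 4 by ring,
      Real.sin_add, Real.sin_sub]; ring
  have h3 : Real.cos ((x - y) / 4) - Real.cos ((x + y - 2 * z) / 4) =
      2 * Real.sin ((x - z) / 4) * Real.sin ((y - z) / 4) := by
    rw [show (x - y) / 4 = (x - z) / 4 - (y - z) / 4 by ring,
      show (x + y - 2 * z) / 4 = (x - z) / 4 + (y - z) / 4 by ring, Real.cos_add, Real.cos_sub]; ring
  have h4 : Real.sin (x / 2) + Real.sin (y / 2) - Real.sin (z / 2) - Real.sin ((x + y - z) / 2)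
    = 2 * Real.sin ((x + y) / 4) * (Real.cos ((x - y) / 4) - Real.cos ((x + y - 2 * z) / 4)) := by
    linear_combination h1 - h2
  rw [h4, h3]; ring

lemma sin_quarter {t : ℝ} (h : |t| ≤ 2 * π) : |t| ≤ 2 * π * |Real.sin (t / 4)| := by
  have h1 := Real.mul_abs_le_abs_sin (x := t / 4) (by rw [abs_div, abs_of_pos (by norm_num : (0:ℝ) < 4)]; linarith)
  have h2 : 2 * π * (2 / π * |t / 4|) = |t| := by
    rw [abs_div, abs_of_pos (by norm_num : (0:ℝ) < 4)]
    field_simp; ring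
  rw [← h2]
  have := Real.pi_pos
  gcongr

lemma G3_bound {f : ℝ → ℂ} {K : NNReal} (hlip : LipschitzWith K f) (x y z : ℝ) :
    G3 f x y z ≤ 4 * K ^ 2 * (|x - z| * |y - z|) := by
  unfold G3
  have i1 : ‖f x + f y - f z - f (x + y - z)‖ ≤ 2 * K * |x - z| := by
    have a1 := lipf hlip x z
    have a2 := lipf hlip (x + y - z) y
    rw [show x + y - z - y = x - z by ring] at a2
    have := norm_sub_le (f x - f z) (f (x + y - z) - f y)
    rw [show f x - f z - (f (x + y - z) - f y) = f x + f y - f z - f (x + y - z) by ring] at this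
    linarith
  have i2 : ‖f x + f y - f z - f (x + y - z)‖ ≤ 2 * K * |y - z| := by
    have a1 := lipf hlip y z
    have a2 := lipf hlip (x + y - z) x
    rw [show x + y - z - x = y - z by ring] at a2
    have := norm_sub_le (f y - f z) (f (x + y - z) - f x)
    rw [show f y - f z - (f (x + y - z) - f x) = f x + f y - f z - f (x + y - z) by ring] at this
    linarith
  rw [sq]
  calc _ ≤ (2 * K * |x - z|) * (2 * K * |y - z|) := mul_le_mul i1 i2 (norm_nonneg _) (by positivity)
    _ = _ := by ring

lemma S_pos {p : ℝ × ℝ × ℝ} (h : p ∈ RM) : 0 < Real.sin ((p.1 + p.2.1) / 4) := by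
  obtain ⟨⟨⟨a, b⟩, ⟨c, d⟩, ⟨e, g⟩⟩, i, j⟩ := h
  apply Real.sin_pos_of_pos_of_lt_pi <;> linarith

lemma RM_key {f : ℝ → ℂ} {K : NNReal} (hlip : LipschitzWith K f) {p : ℝ × ℝ × ℝ} (h : p ∈ RM) :
    Real.sin ((p.1 + p.2.1) / 4) * G3 f p.1 p.2.1 p.2.2 ≤
      4 * π ^ 2 * K ^ 2 * |Omg p.1 p.2.1 p.2.2| := by
  have hS := S_pos h
  obtain ⟨x, y, z⟩ := p
  rw [Omg_M h]
  obtain ⟨⟨⟨a, b⟩, ⟨c, d⟩, ⟨e, g⟩⟩, i, j⟩ := h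
  simp only at a b c d e g i j hS ⊢
  have h1 := sin_quarter (t := x - z) (by rw [abs_le]; constructor <;> linarith)
  have h2 := sin_quarter (t := y - z) (by rw [abs_le]; constructor <;> linarith)
  have h3 := G3_bound hlip x y z
  rw [abs_mul, abs_mul, abs_mul, abs_of_pos hS, abs_of_pos (by norm_num : (0:ℝ) < 4)]
  have hp := Real.pi_pos
  calc _ ≤ Real.sin ((x + y) / 4) * (4 * K ^ 2 * ((2 * π * |Real.sin ((x - z) / 4)|)
          * (2 * π * |Real.sin ((y - z) / 4)|))) := by
        gcongr
        exact h3.trans (by gcongr)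
    _ = _ := by ring

lemma S3_int : IntegrableOn (fun p : ℝ × ℝ × ℝ => 1 / Real.sin ((p.1 + p.2.1) / 4))
    (II ×ˢ II ×ˢ II) := by
  have h1 : MeasurePreserving (MeasurableEquiv.prodAssoc : (ℝ × ℝ) × ℝ ≃ᵐ ℝ × ℝ × ℝ) volume volume :=
    volume_preserving_prodAssoc
  rw [← h1.integrableOn_comp_preimage (MeasurableEquiv.measurableEmbedding _)]
  have hs : (MeasurableEquiv.prodAssoc : (ℝ × ℝ) × ℝ ≃ᵐ ℝ × ℝ × ℝ) ⁻¹' (II ×ˢ II ×ˢ II) =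
      (II ×ˢ II) ×ˢ II := by
    ext ⟨⟨x, y⟩, z⟩
    show (x ∈ II ∧ y ∈ II ∧ z ∈ II) ↔ ((x ∈ II ∧ y ∈ II) ∧ z ∈ II)
    tauto
  rw [hs]
  have h2 : IntegrableOn (fun _ : ℝ => (1:ℝ)) II := integrableOn_const (by
    unfold II; rw [Real.volume_Ico]; exact ENNReal.ofReal_ne_top)
  have h3 := Integrable.mul_prod integrableOn_S h2
  rw [Measure.prod_restrict] at h3
  unfold IntegrableOn
  rw [Measure.volume_eq_prod]
  refine h3.congr (Eventually.of_forall ?_)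
  rintro ⟨⟨x, y⟩, z⟩
  simp only [mul_one]
  rfl

lemma RM_limit {f : ℝ → ℂ} {K : NNReal} (hlip : LipschitzWith K f) :
    Tendsto (fun ε => ∫ p in RM, FF f ε p) (𝓝[>] 0) (𝓝 0) := by
  have hf := hlip.continuous
  have t : Tendsto (fun ε => ∫ p in RM, FF f ε p) (𝓝[>] 0) (𝓝 (∫ p in RM, (0:ℝ))) := by
    apply tendsto_integral_filter_of_dominated_convergence
      (fun p => 4 * π ^ 2 * (K:ℝ) ^ 2 * (1 / Real.sin ((p.1 + p.2.1) / 4)))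
    · filter_upwards [self_mem_nhdsWithin] with ε hε
      exact (FF_cont hf hε).aestronglyMeasurable
    · filter_upwards [self_mem_nhdsWithin] with ε hε
      filter_upwards [ae_restrict_mem mRM] with p hp
      have hS := S_pos hp
      have k := RM_key hlip hp
      have d0 := deltaE_nonneg hε (Omg p.1 p.2.1 p.2.2)
      have d1 := deltaE_mul_abs hε (Omg p.1 p.2.1 p.2.2)
      unfold FF
      rw [Real.norm_of_nonneg (mul_nonneg d0 (G3_nonneg _ _ _ _)), mul_one_div, le_div_iff₀ hS]
      calc _ = deltaE ε (Omg p.1 p.2.1 p.2.2) *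
            (Real.sin ((p.1 + p.2.1) / 4) * G3 f p.1 p.2.1 p.2.2) := by ring
        _ ≤ deltaE ε (Omg p.1 p.2.1 p.2.2) * (4 * π ^ 2 * K ^ 2 * |Omg p.1 p.2.1 p.2.2|) := by gcongr
        _ = 4 * π ^ 2 * K ^ 2 * (deltaE ε (Omg p.1 p.2.1 p.2.2) * |Omg p.1 p.2.1 p.2.2|) := by ring
        _ ≤ 4 * π ^ 2 * K ^ 2 * 1 := by gcongr
        _ = _ := mul_one _
    · have hsub : RM ⊆ II ×ˢ II ×ˢ II := inter_subset_left.trans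
        (prod_mono Ioo_subset_Ico_self (prod_mono Ioo_subset_Ico_self Ioo_subset_Ico_self))
      exact (S3_int.mono_set hsub).const_mul _
    · filter_upwards [ae_restrict_mem mRM] with p hp
      apply deltaE_mul_tendsto
      intro hz
      have hS := S_pos hp
      have k := RM_key hlip hp
      rw [hz, abs_zero, mul_zero] at k
      have g0 := G3_nonneg f p.1 p.2.1 p.2.2
      nlinarith
  simpa using t

theorem part1 {f : ℝ → ℂ} {K : NNReal} (hper : Function.Periodic f (2 * π))
    (hlip : LipschitzWith K f) {B : ℝ} (hB : ∀ x, ‖f x‖ ≤ B) :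
    Tendsto (fun ε : ℝ => (1 / 4) * ∫ p in II ×ˢ II ×ˢ II, FF f ε p) (𝓝[>] 0) (𝓝 (Elim f)) := by
  have hf := hlip.continuous
  have hper' : Function.Periodic (fun x => f (-x)) (2 * π) := fun x => by
    show f (-(x + 2 * π)) = f (-x)
    rw [← hper (-(x + 2 * π))]; congr 1; ring
  have hlip' : LipschitzWith K (fun x => f (-x)) := by
    have := hlip.comp (LipschitzWith.id.neg)
    rw [mul_one] at this
    exact this
  have t1 := RM_limit hlip
  have t2 := RA_limit hper hlip hB
  have t3 := RA_limit hper' hlip' (fun x => hB (-x))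
  have t := (t1.add (t2.add t3)).const_mul (1 / 4)
  rw [show 1 / 4 * (0 + (4 * ET f + 4 * ET fun x => f (-x))) = Elim f by
    rw [Elim_split hper hf hB]; ring] at t
  refine t.congr' ?_
  filter_upwards [self_mem_nhdsWithin] with ε hε
  rw [FF_split hf hε, RB_refl hper]

theorem final
    (f : ℝ → ℂ) (K : NNReal) (hper : Function.Periodic f (2 * π))
    (hlip : LipschitzWith K f) :
    Tendsto
      (fun ε : ℝ =>
        (1 / 4) * ∫ p in II ×ˢ II ×ˢ II,
          deltaE ε (Omg p.1 p.2.1 p.2.2) *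
            ‖f p.1 + f p.2.1 - f p.2.2 - f (p.1 + p.2.1 - p.2.2)‖ ^ 2)
      (𝓝[>] (0 : ℝ)) (𝓝 (Elim f)) ∧
    0 ≤ Elim f ∧
    IntegrableOn
      (fun p : ℝ × ℝ =>
        (1 / (2 * Real.sqrt (Fp p.1 p.2))) *
          ‖f p.1 + f (hFPU p.1 p.2) - f p.2 - f (p.1 - p.2 + hFPU p.1 p.2)‖ ^ 2)
      (II ×ˢ II) ∧
    (Elim f : ℂ)
      = ((∫ x in II, VV x * ‖f x‖ ^ 2 : ℝ) : ℂ) +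
        ∫ p in II ×ˢ II,
          (starRingEnd ℂ) (f p.1) * ((K1 p.1 p.2 - 2 * K2 p.1 p.2 : ℝ) : ℂ) * f p.2 := by
  obtain ⟨B, -, hB⟩ := bdd_of_lip hper hlip
  have hf := hlip.continuous
  refine ⟨part1 hper hlip hB, ?_, eI_integrable hf hB, part4 hper hf hB⟩
  unfold Elim
  exact integral_nonneg (fun p => by positivity)

/-- **Proposition 3.1.**  For `2π`-periodic Lipschitz `f : ℝ → ℂ`, the quadratic form
`⟨f, L_ε f⟩ = (1/4)∫_{I³} δ_ε(Ω)|f(x)+f(y)−f(z)−f(x+y−z)|²` converges as `ε → 0⁺` to a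
finite non-negative limit given by `Elim f`, which moreover equals
`∫_I V|f|² + ∫_{I²} f(x)* (K₁(x,z) − 2K₂(x,z)) f(z) dx dz`. -/
theorem quadratic_form_limit
    (f : ℝ → ℂ) (K : NNReal) (hper : Function.Periodic f (2 * π))
    (hlip : LipschitzWith K f) :
    Tendsto
      (fun ε : ℝ =>
        (1 / 4) * ∫ p in II ×ˢ II ×ˢ II,
          deltaE ε (Omg p.1 p.2.1 p.2.2) *
            ‖f p.1 + f p.2.1 - f p.2.2 - f (p.1 + p.2.1 - p.2.2)‖ ^ 2)
      (𝓝[>] (0 : ℝ)) (𝓝 (Elim f)) ∧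
    0 ≤ Elim f ∧
    IntegrableOn
      (fun p : ℝ × ℝ =>
        (1 / (2 * Real.sqrt (Fp p.1 p.2))) *
          ‖f p.1 + f (hFPU p.1 p.2) - f p.2 - f (p.1 - p.2 + hFPU p.1 p.2)‖ ^ 2)
      (II ×ˢ II) ∧
    (Elim f : ℂ)
      = ((∫ x in II, VV x * ‖f x‖ ^ 2 : ℝ) : ℂ) +
        ∫ p in II ×ˢ II,
          (starRingEnd ℂ) (f p.1) * ((K1 p.1 p.2 - 2 * K2 p.1 p.2 : ℝ) : ℂ) * f p.2 := by
  exact final f K hper hlip
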